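/- arXiv:2601.22994 — 2 statements merged into one kernel-verified Lean document; each statement's English description precedes it below -/
import Mathlib

section
/- For every integer 0 ≤ j ≤ n(n−1)/2 + 1, the left R-submodule Γ_j of R ⊗_{R^{S_n}} R spanned by {S_w : ℓ(w) ≥ j} equals the kernel of the R-bimodule homomorphism ⊕_{w : ℓ(w) < j} F_w : R ⊗_{R^{S_n}} R → ⊕_{w : ℓ(w) < j} R_w. In particular, Γ_j is a sub-R-bimodule of R ⊗_{R^{S_n}} R, i.e., it is stable under the right R-action. -/
open MvPolynomial

noncomputable section

/-- `R n` is the polynomial ring `ℂ[x_1, …, x_n]`. -/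
abbrev R (n : ℕ) := MvPolynomial (Fin n) ℂ

/-- The inversion set of a permutation. -/
def invSet (n : ℕ) (w : Equiv.Perm (Fin n)) : Finset (Fin n × Fin n) :=
  Finset.univ.filter fun p => p.1 < p.2 ∧ w p.2 < w p.1

/-- The Coxeter length of a permutation, i.e. its number of inversions. -/
def len (n : ℕ) (w : Equiv.Perm (Fin n)) : ℕ := (invSet n w).card

/-- `Δ_w = ∏_{(i,j) ∈ inv(w)} (x_i - x_j)`. -/
def Δpoly (n : ℕ) (w : Equiv.Perm (Fin n)) : R n :=
  ∏ p ∈ invSet n w, (X p.1 - X p.2)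

/-- The simple reflection `s_j = (j, j+1)` (1-based `j` corresponds to 0-based index here);
for out-of-range indices we use the identity. -/
def simpleRefl (n : ℕ) (j : ℕ) : Equiv.Perm (Fin n) :=
  if hj : j + 1 < n then Equiv.swap ⟨j, Nat.lt_of_succ_lt hj⟩ ⟨j + 1, hj⟩ else 1

open Classical in
/-- The Demazure operator `∂_j = (id - s_j)/(x_j - x_{j+1})` on `R n`. -/
def demX (n : ℕ) (j : ℕ) (h : R n) : R n :=
  if hj : j + 1 < n then
    let a : Fin n := ⟨j, Nat.lt_of_succ_lt hj⟩
    let b : Fin n := ⟨j + 1, hj⟩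
    if hd : (X a - X b : R n) ∣ (h - rename (Equiv.swap a b) h) then hd.choose else 0
  else 0

/-- Composite Demazure operator along a word `[a_1, …, a_k]`:
`∂_{a_1} ∘ ⋯ ∘ ∂_{a_k}`. -/
def demWord (n : ℕ) (l : List ℕ) (h : R n) : R n := l.foldr (demX n) h

/-- `l` is a reduced word for `w`: `w = s_{a_1} ⋯ s_{a_k}` with `k = ℓ(w)`. -/
def IsReducedWord (n : ℕ) (w : Equiv.Perm (Fin n)) (l : List ℕ) : Prop :=
  (l.map (simpleRefl n)).prod = w ∧ l.length = len n w

open Classical in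
/-- The Demazure operator `∂_w` of a permutation, computed from a (choice of) reduced word;
it is independent of this choice. -/
def dem (n : ℕ) (w : Equiv.Perm (Fin n)) : R n → R n :=
  if h : ∃ l, IsReducedWord n w l then demWord n h.choose else id

/-- The longest element `w_0` of `S_n`. -/
def w₀ (n : ℕ) : Equiv.Perm (Fin n) := Fin.revPerm

/-- The staircase monomial `x_1^{n-1} x_2^{n-2} ⋯ x_{n-1}`. -/
def staircase (n : ℕ) : R n := ∏ i : Fin n, X i ^ (n - 1 - (i : ℕ))

/-- The Schubert polynomial `𝔖_w(x) = ∂_{w⁻¹ w₀}(x_1^{n-1} ⋯ x_{n-1})`. -/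
def schubert (n : ℕ) (w : Equiv.Perm (Fin n)) : R n := dem n (w⁻¹ * w₀ n) (staircase n)



open TensorProduct

/-- The subalgebra `R^{S_n} ⊆ R` of symmetric polynomials. -/
abbrev Ssub (n : ℕ) := MvPolynomial.symmetricSubalgebra (Fin n) ℂ

/-- The tensor product `R ⊗_{R^{S_n}} R`. -/
abbrev T (n : ℕ) := TensorProduct (Ssub n) (R n) (R n)

/-- `rename w` as an `R^{S_n}`-algebra endomorphism of `R`. -/
def renameS (n : ℕ) (w : Equiv.Perm (Fin n)) : R n →ₐ[Ssub n] R n :=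
  { (rename ⇑w : R n →ₐ[ℂ] R n) with
    commutes' := fun s => s.2 w }

/-- `F_w : R ⊗_{R^{S_n}} R → R_w`, the `R`-bimodule homomorphism `f ⊗ g ↦ f · (w·g)`
(the target `R_w` has underlying abelian group `R`). -/
def Fw (n : ℕ) (w : Equiv.Perm (Fin n)) : T n →ₐ[Ssub n] R n :=
  Algebra.TensorProduct.productMap (AlgHom.id (Ssub n) (R n)) (renameS n w)

open Classical in
/-- `S_w = 1 ⊗ 𝔖_w(x) + Σ 𝔖_v(-x) ⊗ 𝔖_u(x)`, the sum over all factorizations `w = v⁻¹ u`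
with `ℓ(u) < ℓ(w)` and `ℓ(w) = ℓ(v) + ℓ(u)`. -/
def Sw (n : ℕ) (w : Equiv.Perm (Fin n)) : T n :=
  (1 : R n) ⊗ₜ[Ssub n] schubert n w +
  ∑ p ∈ Finset.univ.filter
      (fun p : Equiv.Perm (Fin n) × Equiv.Perm (Fin n) =>
        w = p.2⁻¹ * p.1 ∧ len n p.1 < len n w ∧ len n w = len n p.2 + len n p.1),
    (aeval (fun i => -(X i : R n)) (schubert n p.2)) ⊗ₜ[Ssub n] schubert n p.1


/-!
The Demazure operators, applied to either tensor factor, act on the elements `S_w` as they do on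
Schubert polynomials: on the right factor `∂_i` sends `S_w` to `S_{w s_i}` or to `0`, on the left
factor to `-S_{s_i w}` or to `0`, according to whether the length drops. Two identities connect
these operators with the maps `F_w`.

* The twisted Leibniz rule expresses `∂_i (F_1 z)` through the values of `F_1` on the Demazure
  operators of `z`. By induction on `ℓ(w)`, all `∂_i` therefore kill `F_1 S_w` for `w ≠ 1`, so
  `F_1 S_w` is symmetric; as `x_n` does not occur in it, it is constant, and having no constant
  term it is `0`.
* `F_{w s_i} = F_w - w(x_i - x_{i+1}) · F_w ∘ (id ⊗ ∂_i)`. By induction on `ℓ(w)`, this yields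
  `F_w S_w ≠ 0` and `F_w S_u = 0` whenever `ℓ(w) ≤ ℓ(u)` and `u ≠ w`.

The `S_w` are unitriangular in the elements `1 ⊗ 𝔖_w`, and the Schubert polynomials span the
polynomial ring over the symmetric polynomials. Hence the `S_w` span, and reading off coefficients
in order of increasing length gives the kernel of `⊕_{ℓ(w) < j} F_w`.
-/

namespace Schubert

section Triangular

variable {ι κ A M : Type*} [CommRing A] [NoZeroDivisors A] [AddCommGroup M] [Module A M]
  [LinearOrder κ] [WellFoundedLT κ]

theorem span_image_eq_iInf_ker_of_triangular (b : ι → M) (φ : ι → M →ₗ[A] A) (ℓ : ι → κ)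
    (hspan : Submodule.span A (Set.range b) = ⊤) (hdiag : ∀ i, φ i (b i) ≠ 0)
    (htri : ∀ i k, ℓ i ≤ ℓ k → k ≠ i → φ i (b k) = 0) (j : κ) :
    Submodule.span A (b '' {i | j ≤ ℓ i}) = ⨅ i ∈ {i | ℓ i < j}, LinearMap.ker (φ i) := by
  apply le_antisymm
  · rw [Submodule.span_le]
    rintro _ ⟨k, hk, rfl⟩
    simp only [Submodule.coe_iInf, Set.mem_iInter]
    exact fun i hi => htri i k (hi.le.trans hk) (by rintro rfl; exact hi.not_ge hk)
  · intro z hz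
    simp only [Submodule.mem_iInf, Set.mem_ofPred_eq, LinearMap.mem_ker] at hz
    have hz_span : z ∈ Submodule.span A (Set.range b) := hspan ▸ Submodule.mem_top
    obtain ⟨c, rfl⟩ := Finsupp.mem_span_range_iff_exists_finsupp.1 hz_span
    have coeff_eq_zero : ∀ i, ℓ i < j → c i = 0 := by
      intro i
      induction hd : ℓ i using WellFoundedLT.induction generalizing i with
      | _ d ih =>
      subst hd
      intro hi
      have h := hz i hi
      rw [Finsupp.sum, map_sum, Finset.sum_eq_single i] at h
      · simpa [hdiag i] using h
      · intro k _ hk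
        rcases lt_or_ge (ℓ k) (ℓ i) with hlt | hle
        · rw [ih _ hlt k rfl (hlt.trans hi), zero_smul, map_zero]
        · rw [map_smul, htri i k hle hk, smul_zero]
      · intro hc
        rw [Finsupp.notMem_support_iff.1 hc, zero_smul, map_zero]
    refine Submodule.sum_mem _ fun i hi => Submodule.smul_mem _ _ ?_
    refine Submodule.subset_span ⟨i, ?_, rfl⟩
    exact not_lt.1 fun hlt => Finsupp.mem_support_iff.1 hi (coeff_eq_zero i hlt)

end Triangular

section MvPolynomial

variable {σ A : Type*}

theorem X_sub_X_dvd_sub_rename_swap [CommRing A] [DecidableEq σ] (a b : σ) (f : MvPolynomial σ A) :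
    X a - X b ∣ f - rename (Equiv.swap a b) f := by
  let I : Ideal (MvPolynomial σ A) := Ideal.span {X a - X b}
  have X_a_eq : Ideal.Quotient.mk I (X a) = Ideal.Quotient.mk I (X b) :=
    Ideal.Quotient.eq.2 (Ideal.mem_span_singleton_self _)
  have mk_comp_rename : (Ideal.Quotient.mkₐ A I).comp (rename (Equiv.swap a b)) =
      Ideal.Quotient.mkₐ A I := by
    ext k
    rcases eq_or_ne k a with rfl | ha
    · simp [X_a_eq]
    rcases eq_or_ne k b with rfl | hb
    · simp [X_a_eq]
    · simp [Equiv.swap_apply_of_ne_of_ne ha hb]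
  rw [← Ideal.mem_span_singleton, ← Ideal.Quotient.eq]
  exact (DFunLike.congr_fun mk_comp_rename f).symm

theorem isHomogeneous_of_mul_left [CommRing A] [IsDomain A] {p q : MvPolynomial σ A} {d e : ℕ}
    (hp : p.IsHomogeneous d) (hp0 : p ≠ 0) (hpq : (p * q).IsHomogeneous (d + e)) :
    q.IsHomogeneous e := by
  let : GradedAlgebra (homogeneousSubmodule σ A) := gradedAlgebra
  have mul_component : p * q = p * homogeneousComponent e q := by
    rw [← decomposition.decompose'_apply]
    exact (DirectSum.decompose_of_mem_same _ hpq).symm.trans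
      (DirectSum.coe_decompose_mul_add_of_left_mem (homogeneousSubmodule σ A) hp)
  rw [mul_left_cancel₀ hp0 mul_component]
  exact homogeneousComponent_isHomogeneous e q

theorem one_le_degreeOf_X_sub_X [CommRing A] [Nontrivial A] {a b k : σ} (hab : a ≠ b)
    (hk : k = a ∨ k = b) : 1 ≤ degreeOf k (X a - X b : MvPolynomial σ A) := by
  classical
  rw [Nat.one_le_iff_ne_zero, ← mem_vars_iff_degreeOf_ne_zero, sub_eq_add_neg]
  rw [vars_add_of_disjoint] <;> simp [hab, hk]

theorem eq_C_of_isSymmetric_of_degreeOf_eq_zero [CommSemiring A] {f : MvPolynomial σ A}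
    (hf : f.IsSymmetric) {a : σ} (ha : degreeOf a f = 0) : f = C (constantCoeff f) := by
  classical
  rw [constantCoeff_eq, ← vars_eq_empty_iff_eq_C, Finset.eq_empty_iff_forall_notMem]
  intro k
  have h := degreeOf_rename_of_injective (p := f) (Equiv.swap a k).injective a
  rw [hf, Equiv.swap_apply_left, ha] at h
  rwa [mem_vars_iff_degreeOf_ne_zero, not_not]

end MvPolynomial

/-- `D` is the divided difference `(id - s) / α` attached to an involution `s` that negates `α`.
The quotient is characterised by multiplying back, which pins it down in a domain. -/
structure IsDividedDifference {k A : Type*} [CommSemiring k] [CommRing A] [Algebra k A]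
    (s : A →ₐ[k] A) (α : A) (D : A → A) : Prop where
  involutive : Function.Involutive s
  map_root : s α = -α
  root_ne_zero : α ≠ 0
  root_mul : ∀ f, α * D f = f - s f

namespace IsDividedDifference

variable {k A : Type*} [CommSemiring k] [CommRing A] [Algebra k A]
  {s t : A →ₐ[k] A} {α β : A} {D E : A → A}

theorem root_mul_root_mul (hD : IsDividedDifference s α D) (hE : IsDividedDifference t β E)
    (hsβ : s β = β) (f : A) : α * β * D (E f) = f - s f - t f + s (t f) := by
  have h := congrArg s (hE.root_mul f)
  rw [_root_.map_mul, map_sub, hsβ] at h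
  linear_combination β * hD.root_mul (E f) + hE.root_mul f - h

variable [IsDomain A]

theorem eq_of_root_mul (hD : IsDividedDifference s α D) {f g : A} (h : α * g = f - s f) :
    D f = g :=
  mul_left_cancel₀ hD.root_ne_zero ((hD.root_mul f).trans h.symm)

theorem map_add (hD : IsDividedDifference s α D) (f g : A) : D (f + g) = D f + D g :=
  hD.eq_of_root_mul (by rw [_root_.map_add]; linear_combination hD.root_mul f + hD.root_mul g)

theorem map_mul (hD : IsDividedDifference s α D) (f g : A) :
    D (f * g) = D f * g + f * D g - α * (D f * D g) := by
  apply hD.eq_of_root_mul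
  have hf : s f = f - α * D f := by rw [hD.root_mul]; ring
  have hg : s g = g - α * D g := by rw [hD.root_mul]; ring
  rw [_root_.map_mul, hf, hg]
  ring

theorem eq_zero_iff (hD : IsDividedDifference s α D) {f : A} : D f = 0 ↔ s f = f := by
  rw [eq_comm (b := f), ← sub_eq_zero (b := s f), ← hD.root_mul, mul_eq_zero,
    or_iff_right hD.root_ne_zero]

theorem map_invariant_mul (hD : IsDividedDifference s α D) {c : A} (hc : s c = c) (f : A) :
    D (c * f) = c * D f := by
  rw [hD.map_mul, hD.eq_zero_iff.2 hc]
  ring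

theorem map_apply (hD : IsDividedDifference s α D) (f : A) : s (D f) = D f := by
  apply mul_left_cancel₀ hD.root_ne_zero
  have h := congrArg s (hD.root_mul f)
  rw [_root_.map_mul, hD.map_root, map_sub, hD.involutive] at h
  linear_combination -h - hD.root_mul f

theorem apply_apply (hD : IsDividedDifference s α D) (f : A) : D (D f) = 0 :=
  hD.eq_zero_iff.2 (hD.map_apply f)

theorem comm (hD : IsDividedDifference s α D) (hE : IsDividedDifference t β E)
    (hst : ∀ f, s (t f) = t (s f)) (hsβ : s β = β) (htα : t α = α) (f : A) :
    D (E f) = E (D f) := by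
  apply mul_left_cancel₀ (mul_ne_zero hD.root_ne_zero hE.root_ne_zero)
  rw [hD.root_mul_root_mul hE hsβ, mul_comm α, hE.root_mul_root_mul hD htα, hst]
  ring

theorem root_mul_root_mul_root_mul (hD : IsDividedDifference s α D)
    (hE : IsDividedDifference t β E) (hsβ : s β = α + β) (htα : t α = α + β) (f : A) :
    α * β * (α + β) * D (E (D f)) =
      f - s f - t f + s (t f) + t (s f) - s (t (s f)) := by
  have hDf := hD.root_mul f
  have hEDf := hE.root_mul (D f)
  have hDEDf := hD.root_mul (E (D f))
  have htDf := congrArg t hDf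
  have hstDf := congrArg s htDf
  have hsEDf := congrArg s hEDf
  have hsum : s (α + β) = β := by rw [_root_.map_add, hD.map_root, hsβ]; ring
  simp only [_root_.map_mul, map_sub, htα, hsβ, hsum, hD.map_apply] at htDf hstDf hsEDf
  linear_combination β * (α + β) * hDEDf + (α + β) * hEDf - β * hsEDf + hDf - htDf + hstDf

theorem braid (hD : IsDividedDifference s α D) (hE : IsDividedDifference t β E)
    (hst : ∀ f, s (t (s f)) = t (s (t f))) (hsβ : s β = α + β) (htα : t α = α + β)
    (hαβ : α + β ≠ 0) (f : A) : D (E (D f)) = E (D (E f)) := by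
  apply mul_left_cancel₀ (mul_ne_zero (mul_ne_zero hD.root_ne_zero hE.root_ne_zero) hαβ)
  rw [hD.root_mul_root_mul_root_mul hE hsβ htα, mul_comm α, add_comm α,
    hE.root_mul_root_mul_root_mul hD (htα.trans (add_comm _ _)) (hsβ.trans (add_comm _ _)), hst]
  ring

end IsDividedDifference

variable {n : ℕ}

section SimpleReflections

/-- The position of the simple reflection `s_i`: the index `i`, as an element of `Fin n`. -/
def idx {i : ℕ} (hi : i + 1 < n) : Fin n := ⟨i, Nat.lt_of_succ_lt hi⟩

/-- The position following that of `s_i`: the index `i + 1`, as an element of `Fin n`. -/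
def idxSucc {i : ℕ} (hi : i + 1 < n) : Fin n := ⟨i + 1, hi⟩

@[simp] theorem val_idx {i : ℕ} (hi : i + 1 < n) : (idx hi : ℕ) = i := rfl

@[simp] theorem val_idxSucc {i : ℕ} (hi : i + 1 < n) : (idxSucc hi : ℕ) = i + 1 := rfl

theorem idx_lt_idxSucc {i : ℕ} (hi : i + 1 < n) : idx hi < idxSucc hi := Fin.lt_def.2 i.lt_succ_self

theorem simpleRefl_eq_swap {i : ℕ} (hi : i + 1 < n) :
    simpleRefl n i = Equiv.swap (idx hi) (idxSucc hi) := dif_pos hi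

theorem simpleRefl_of_not_lt {i : ℕ} (hi : ¬i + 1 < n) : simpleRefl n i = 1 := dif_neg hi

@[simp] theorem simpleRefl_mul_self (i : ℕ) : simpleRefl n i * simpleRefl n i = 1 := by
  by_cases hi : i + 1 < n
  · rw [simpleRefl_eq_swap hi, Equiv.swap_mul_self]
  · rw [simpleRefl_of_not_lt hi, one_mul]

@[simp] theorem inv_simpleRefl (i : ℕ) : (simpleRefl n i)⁻¹ = simpleRefl n i :=
  inv_eq_of_mul_eq_one_right (simpleRefl_mul_self i)

@[simp] theorem simpleRefl_mul_cancel_left (i : ℕ) (w : Equiv.Perm (Fin n)) :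
    simpleRefl n i * (simpleRefl n i * w) = w := by
  rw [← mul_assoc, simpleRefl_mul_self, one_mul]

@[simp] theorem mul_simpleRefl_cancel_right (w : Equiv.Perm (Fin n)) (i : ℕ) :
    w * simpleRefl n i * simpleRefl n i = w := by
  rw [mul_assoc, simpleRefl_mul_self, mul_one]

@[simp] theorem simpleRefl_apply_idx {i : ℕ} (hi : i + 1 < n) :
    simpleRefl n i (idx hi) = idxSucc hi := by
  rw [simpleRefl_eq_swap hi, Equiv.swap_apply_left]

@[simp] theorem simpleRefl_apply_idxSucc {i : ℕ} (hi : i + 1 < n) :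
    simpleRefl n i (idxSucc hi) = idx hi := by
  rw [simpleRefl_eq_swap hi, Equiv.swap_apply_right]

theorem val_simpleRefl_apply {i : ℕ} (hi : i + 1 < n) (k : Fin n) :
    (simpleRefl n i k : ℕ) = if (k : ℕ) = i then i + 1 else if (k : ℕ) = i + 1 then i else k := by
  rw [simpleRefl_eq_swap hi, Equiv.swap_apply_def]
  simp only [Fin.ext_iff, val_idx, val_idxSucc]
  split_ifs <;> rfl

theorem simpleRefl_apply_of_ne {i : ℕ} {k : Fin n} (h : (k : ℕ) ≠ i) (h' : (k : ℕ) ≠ i + 1) :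
    simpleRefl n i k = k := by
  by_cases hi : i + 1 < n
  · rw [Fin.ext_iff, val_simpleRefl_apply hi, if_neg h, if_neg h']
  · rw [simpleRefl_of_not_lt hi, Equiv.Perm.one_apply]

theorem idx_succ {i : ℕ} (hi : i + 1 + 1 < n) : idx hi = idxSucc (Nat.lt_of_succ_lt hi) := rfl

theorem simpleRefl_apply_idxSucc_succ {i : ℕ} (hi : i + 1 + 1 < n) :
    simpleRefl n i (idxSucc hi) = idxSucc hi :=
  simpleRefl_apply_of_ne (by simp only [val_idxSucc]; lia) (by simp)

theorem simpleRefl_succ_apply_idx {i : ℕ} (hi : i + 1 + 1 < n) :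
    simpleRefl n (i + 1) (idx (Nat.lt_of_succ_lt hi)) = idx (Nat.lt_of_succ_lt hi) :=
  simpleRefl_apply_of_ne (by simp) (by simp only [val_idx]; lia)

theorem simpleRefl_succ_apply_idxSucc {i : ℕ} (hi : i + 1 + 1 < n) :
    simpleRefl n (i + 1) (idxSucc (Nat.lt_of_succ_lt hi)) = idxSucc hi := simpleRefl_apply_idx hi

theorem simpleRefl_comm {i j : ℕ} (hij : i + 1 < j) :
    simpleRefl n i * simpleRefl n j = simpleRefl n j * simpleRefl n i := by
  by_cases hj : j + 1 < n
  · ext k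
    simp only [Equiv.Perm.mul_apply, val_simpleRefl_apply hj,
      val_simpleRefl_apply (show i + 1 < n by lia)]
    split_ifs <;> lia
  · rw [simpleRefl_of_not_lt hj, one_mul, mul_one]

theorem simpleRefl_braid {i : ℕ} (hi : i + 1 + 1 < n) :
    simpleRefl n i * simpleRefl n (i + 1) * simpleRefl n i =
      simpleRefl n (i + 1) * simpleRefl n i * simpleRefl n (i + 1) := by
  have hi' : i + 1 < n := Nat.lt_of_succ_lt hi
  have hab : idx hi' ≠ idxSucc hi' := (idx_lt_idxSucc hi').ne
  have hbc : idxSucc hi' ≠ idxSucc hi := (idx_lt_idxSucc hi).ne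
  have hac : idx hi' ≠ idxSucc hi := ((idx_lt_idxSucc hi').trans (idx_lt_idxSucc hi)).ne
  rw [simpleRefl_eq_swap hi', simpleRefl_eq_swap hi, idx_succ hi,
    Equiv.swap_mul_swap_mul_swap hab hac, Equiv.swap_comm (idx hi'),
    Equiv.swap_comm _ (idxSucc hi), Equiv.swap_mul_swap_mul_swap hbc.symm hac.symm,
    Equiv.swap_comm]

end SimpleReflections

section Length

theorem mem_invSet {w : Equiv.Perm (Fin n)} {p : Fin n × Fin n} :
    p ∈ invSet n w ↔ p.1 < p.2 ∧ w p.2 < w p.1 := by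
  simp [invSet]

theorem simpleRefl_lt_simpleRefl {i : ℕ} (hi : i + 1 < n) {p q : Fin n} (hpq : p < q)
    (hne : (p, q) ≠ (idx hi, idxSucc hi)) : simpleRefl n i p < simpleRefl n i q := by
  simp only [ne_eq, Prod.ext_iff, Fin.ext_iff, val_idx, val_idxSucc] at hne
  rw [Fin.lt_def] at hpq ⊢
  rw [val_simpleRefl_apply hi, val_simpleRefl_apply hi]
  split_ifs <;> lia

theorem simpleRefl_prod_ne {i : ℕ} (hi : i + 1 < n) {p q : Fin n} (hpq : p < q) :
    (simpleRefl n i p, simpleRefl n i q) ≠ (idx hi, idxSucc hi) := by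
  simp only [ne_eq, Prod.ext_iff, Fin.ext_iff, val_idx, val_idxSucc, val_simpleRefl_apply hi]
  rw [Fin.lt_def] at hpq
  split_ifs <;> lia

/-- The reflection `s_i` permutes all pairs `p < q` other than `(i, i + 1)`, so multiplication by
`s_i` changes only the contribution of that pair. -/
theorem card_erase_invSet_mul_simpleRefl (w : Equiv.Perm (Fin n)) {i : ℕ} (hi : i + 1 < n) :
    ((invSet n (w * simpleRefl n i)).erase (idx hi, idxSucc hi)).card =
      ((invSet n w).erase (idx hi, idxSucc hi)).card := by
  have map_mem : ∀ u : Equiv.Perm (Fin n), ∀ p ∈ (invSet n u).erase (idx hi, idxSucc hi),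
      (simpleRefl n i p.1, simpleRefl n i p.2) ∈
        (invSet n (u * simpleRefl n i)).erase (idx hi, idxSucc hi) := by
    rintro u ⟨p, q⟩ hpq
    simp only [Finset.mem_erase, mem_invSet, Equiv.Perm.mul_apply, ← Equiv.Perm.mul_apply
      (simpleRefl n i), simpleRefl_mul_self, Equiv.Perm.one_apply] at hpq ⊢
    exact ⟨simpleRefl_prod_ne hi hpq.2.1, simpleRefl_lt_simpleRefl hi hpq.2.1 hpq.1, hpq.2.2⟩
  have involutive : Function.Involutive fun p : Fin n × Fin n =>
      (simpleRefl n i p.1, simpleRefl n i p.2) := fun p => by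
    simp [← Equiv.Perm.mul_apply]
  refine Finset.card_nbij' (fun p => (simpleRefl n i p.1, simpleRefl n i p.2))
    (fun p => (simpleRefl n i p.1, simpleRefl n i p.2)) ?_ (map_mem w)
    (fun p _ => involutive p) (fun p _ => involutive p)
  have map_mem_inv := map_mem (w * simpleRefl n i)
  rwa [mul_simpleRefl_cancel_right] at map_mem_inv

theorem len_mul_simpleRefl_of_lt {w : Equiv.Perm (Fin n)} {i : ℕ} (hi : i + 1 < n)
    (h : w (idx hi) < w (idxSucc hi)) : len n (w * simpleRefl n i) = len n w + 1 := by
  have mem : (idx hi, idxSucc hi) ∈ invSet n (w * simpleRefl n i) := by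
    simpa [mem_invSet, idx_lt_idxSucc hi] using h
  have notMem : (idx hi, idxSucc hi) ∉ invSet n w := fun hmem => h.not_gt (mem_invSet.1 hmem).2
  have card := card_erase_invSet_mul_simpleRefl w hi
  rw [Finset.erase_eq_of_notMem notMem] at card
  rw [len, ← Finset.card_erase_add_one mem, card, len]

theorem len_mul_simpleRefl_add_one_of_gt {w : Equiv.Perm (Fin n)} {i : ℕ} (hi : i + 1 < n)
    (h : w (idxSucc hi) < w (idx hi)) : len n (w * simpleRefl n i) + 1 = len n w := by
  simpa using (len_mul_simpleRefl_of_lt (w := w * simpleRefl n i) hi (by simpa using h)).symm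

theorem len_mul_simpleRefl_lt_iff {w : Equiv.Perm (Fin n)} {i : ℕ} (hi : i + 1 < n) :
    len n (w * simpleRefl n i) < len n w ↔ w (idxSucc hi) < w (idx hi) := by
  rcases lt_or_gt_of_ne (w.injective.ne (idx_lt_idxSucc hi).ne) with h | h
  · have := len_mul_simpleRefl_of_lt hi h
    simp only [h.not_gt, iff_false]
    lia
  · have := len_mul_simpleRefl_add_one_of_gt hi h
    simp only [h, iff_true]
    lia

theorem len_mul_simpleRefl_eq_or (w : Equiv.Perm (Fin n)) {i : ℕ} (hi : i + 1 < n) :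
    len n (w * simpleRefl n i) = len n w + 1 ∨ len n (w * simpleRefl n i) + 1 = len n w :=
  (lt_or_gt_of_ne (w.injective.ne (idx_lt_idxSucc hi).ne)).imp
    (len_mul_simpleRefl_of_lt hi) (len_mul_simpleRefl_add_one_of_gt hi)

theorem len_inv (w : Equiv.Perm (Fin n)) : len n w⁻¹ = len n w :=
  Finset.card_nbij' (fun p => (w⁻¹ p.2, w⁻¹ p.1)) (fun p => (w p.2, w p.1))
    (fun p hp => by simpa [mem_invSet, and_comm] using hp)
    (fun p hp => by simpa [mem_invSet, and_comm] using hp)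
    (fun p _ => by simp) (fun p _ => by simp)

theorem len_simpleRefl_mul (i : ℕ) (w : Equiv.Perm (Fin n)) :
    len n (simpleRefl n i * w) = len n (w⁻¹ * simpleRefl n i) := by
  rw [← len_inv, mul_inv_rev, inv_simpleRefl]

theorem len_simpleRefl_mul_lt_iff {w : Equiv.Perm (Fin n)} {i : ℕ} (hi : i + 1 < n) :
    len n (simpleRefl n i * w) < len n w ↔ w⁻¹ (idxSucc hi) < w⁻¹ (idx hi) := by
  rw [len_simpleRefl_mul, ← len_inv w, len_mul_simpleRefl_lt_iff]

theorem len_simpleRefl_mul_eq_or {i : ℕ} (hi : i + 1 < n) (w : Equiv.Perm (Fin n)) :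
    len n (simpleRefl n i * w) = len n w + 1 ∨ len n (simpleRefl n i * w) + 1 = len n w := by
  rw [len_simpleRefl_mul, ← len_inv w]
  exact len_mul_simpleRefl_eq_or _ hi

theorem lt_of_len_simpleRefl_mul_lt {w : Equiv.Perm (Fin n)} {i : ℕ}
    (h : len n (simpleRefl n i * w) < len n w) : i + 1 < n := by
  by_contra hi
  rw [simpleRefl_of_not_lt hi, one_mul] at h
  exact h.false

theorem len_simpleRefl_mul_add_one {w : Equiv.Perm (Fin n)} {i : ℕ}
    (h : len n (simpleRefl n i * w) < len n w) : len n (simpleRefl n i * w) + 1 = len n w := by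
  have := len_simpleRefl_mul_eq_or (lt_of_len_simpleRefl_mul_lt h) w
  lia

theorem len_simpleRefl_mul_le (i : ℕ) (w : Equiv.Perm (Fin n)) :
    len n (simpleRefl n i * w) ≤ len n w + 1 := by
  by_cases hi : i + 1 < n
  · have := len_simpleRefl_mul_eq_or hi w
    lia
  · rw [simpleRefl_of_not_lt hi, one_mul]
    exact Nat.le_succ _

@[simp] theorem len_one : len n 1 = 0 := by
  rw [len, Finset.card_eq_zero, Finset.eq_empty_iff_forall_notMem]
  exact fun p hp => (mem_invSet.1 hp).1.not_gt (mem_invSet.1 hp).2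

theorem exists_len_mul_simpleRefl_lt {w : Equiv.Perm (Fin n)} (hw : w ≠ 1) :
    ∃ i, i + 1 < n ∧ len n (w * simpleRefl n i) < len n w := by
  contrapose! hw
  cases n with
  | zero => exact Subsingleton.elim _ _
  | succ m =>
    have strictMono : StrictMono w := by
      refine Fin.strictMono_iff_lt_succ.2 fun i => ?_
      have hi : (i : ℕ) + 1 < m + 1 := Nat.succ_lt_succ i.isLt
      have h := (len_mul_simpleRefl_lt_iff hi).not.1 (hw i hi).not_gt
      exact (not_lt.1 h).lt_of_ne (w.injective.ne (idx_lt_idxSucc hi).ne)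
    exact Equiv.coe_fn_injective
      ((strictMono.range_inj strictMono_id).1 (by simp [w.surjective.range_eq]))

theorem exists_len_simpleRefl_mul_lt {w : Equiv.Perm (Fin n)} (hw : w ≠ 1) :
    ∃ i, i + 1 < n ∧ len n (simpleRefl n i * w) < len n w := by
  obtain ⟨i, hi, h⟩ := exists_len_mul_simpleRefl_lt (inv_ne_one.2 hw)
  exact ⟨i, hi, by rwa [len_simpleRefl_mul, ← len_inv w]⟩

theorem len_eq_zero_iff {w : Equiv.Perm (Fin n)} : len n w = 0 ↔ w = 1 := by
  refine ⟨fun h => ?_, fun h => h ▸ len_one⟩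
  by_contra hw
  obtain ⟨i, -, hi⟩ := exists_len_simpleRefl_mul_lt hw
  lia

theorem len_mul_le (u w : Equiv.Perm (Fin n)) : len n (u * w) ≤ len n u + len n w := by
  induction hk : len n u generalizing u with
  | zero => rw [len_eq_zero_iff.1 hk, one_mul, zero_add]
  | succ k ih =>
    obtain ⟨i, -, h⟩ := exists_len_simpleRefl_mul_lt
      (mt (len_eq_zero_iff (w := u)).2 (by rw [hk]; exact k.succ_ne_zero))
    have hu := len_simpleRefl_mul_add_one h
    have huw := ih (simpleRefl n i * u) (by lia)
    have := len_simpleRefl_mul_le i (simpleRefl n i * u * w)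
    rw [← mul_assoc, simpleRefl_mul_cancel_left] at this
    lia

@[simp] theorem inv_w₀ : (w₀ n)⁻¹ = w₀ n := rfl

theorem len_mul_w₀ (w : Equiv.Perm (Fin n)) : len n (w * w₀ n) + len n w = n.choose 2 := by
  have len_eq_card_noninversions : len n (w * w₀ n) =
      (Finset.univ.filter fun p : Fin n × Fin n => p.1 < p.2 ∧ ¬w p.2 < w p.1).card := by
    refine Finset.card_nbij' (fun p => (p.2.rev, p.1.rev)) (fun p => (p.2.rev, p.1.rev))
      ?_ ?_ (fun p _ => by simp) (fun p _ => by simp)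
    · intro p hp
      simpa [w₀] using And.imp_right le_of_lt (mem_invSet.1 hp)
    · intro p hp
      obtain ⟨hlt, hle⟩ : p.1 < p.2 ∧ w p.1 ≤ w p.2 := by simpa using hp
      simpa [mem_invSet, w₀] using And.intro hlt (hle.lt_of_ne (w.injective.ne hlt.ne))
  rw [len_eq_card_noninversions, add_comm, len, invSet, ← Finset.filter_filter,
    ← Finset.filter_filter, Finset.card_filter_add_card_filter_not,
    Fintype.card_product_filter_lt, Fintype.card_fin]

theorem len_le_choose_two (w : Equiv.Perm (Fin n)) : len n w ≤ n.choose 2 :=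
  (Nat.le_add_left _ _).trans_eq (len_mul_w₀ w)

theorem len_eq_choose_two_iff {w : Equiv.Perm (Fin n)} : len n w = n.choose 2 ↔ w = w₀ n := by
  have h := len_mul_w₀ w
  rw [← mul_inv_eq_one (a := w), inv_w₀, ← len_eq_zero_iff]
  lia

end Length

section DemazureOperators

/-- The linear form `x_i - x_{i+1}` by which the Demazure operator `∂_i` divides. -/
def root {i : ℕ} (hi : i + 1 < n) : R n := X (idx hi) - X (idxSucc hi)

theorem root_ne_zero {i : ℕ} (hi : i + 1 < n) : root hi ≠ 0 :=
  sub_ne_zero.2 (X_injective.ne (idx_lt_idxSucc hi).ne)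

theorem isHomogeneous_root {i : ℕ} (hi : i + 1 < n) : (root hi).IsHomogeneous 1 :=
  (isHomogeneous_X ℂ _).sub (isHomogeneous_X ℂ _)

theorem rename_simpleRefl_root {i : ℕ} (hi : i + 1 < n) :
    rename (simpleRefl n i) (root hi) = -root hi := by
  simp [root]

theorem rename_simpleRefl_involutive (i : ℕ) :
    Function.Involutive (rename (simpleRefl n i) : R n →ₐ[ℂ] R n) := fun f => by
  rw [rename_rename, ← Equiv.Perm.coe_mul, simpleRefl_mul_self, Equiv.Perm.coe_one, rename_id_apply]

theorem isDividedDifference_demX {i : ℕ} (hi : i + 1 < n) :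
    IsDividedDifference (rename (simpleRefl n i) : R n →ₐ[ℂ] R n) (root hi) (demX n i) where
  involutive := rename_simpleRefl_involutive i
  map_root := rename_simpleRefl_root hi
  root_ne_zero := root_ne_zero hi
  root_mul f := by
    have dvd : root hi ∣ f - rename (Equiv.swap (idx hi) (idxSucc hi)) f :=
      X_sub_X_dvd_sub_rename_swap _ _ f
    rw [simpleRefl_eq_swap hi]
    refine Eq.trans ?_ dvd.choose_spec.symm
    rw [demX, dif_pos hi]
    exact congrArg _ (dif_pos dvd)

theorem demX_of_not_lt {i : ℕ} (hi : ¬i + 1 < n) (f : R n) : demX n i f = 0 := dif_neg hi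

/-- The Demazure operator `∂_i` as an `R^{S_n}`-linear endomorphism of `R`. -/
def demXLinear (n i : ℕ) : R n →ₗ[Ssub n] R n where
  toFun := demX n i
  map_add' f g := by
    by_cases hi : i + 1 < n
    · exact (isDividedDifference_demX hi).map_add f g
    · simp only [demX_of_not_lt hi, add_zero]
  map_smul' c f := by
    by_cases hi : i + 1 < n
    · exact (isDividedDifference_demX hi).map_invariant_mul (c.2 _) f
    · simp only [demX_of_not_lt hi, smul_zero]

@[simp] theorem demX_zero (i : ℕ) : demX n i 0 = 0 := map_zero (demXLinear n i)

@[simp] theorem demX_demX (i : ℕ) (f : R n) : demX n i (demX n i f) = 0 := by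
  by_cases hi : i + 1 < n
  · exact (isDividedDifference_demX hi).apply_apply f
  · exact demX_of_not_lt hi _

theorem demX_comm {i j : ℕ} (hij : i + 1 < j) (f : R n) :
    demX n i (demX n j f) = demX n j (demX n i f) := by
  by_cases hj : j + 1 < n
  · have hi : i + 1 < n := by lia
    refine (isDividedDifference_demX hi).comm (isDividedDifference_demX hj) (fun g => ?_) ?_ ?_ f
    · simp only [rename_rename, ← Equiv.Perm.coe_mul, simpleRefl_comm hij]
    all_goals
      rw [root, map_sub, rename_X, rename_X, simpleRefl_apply_of_ne, simpleRefl_apply_of_ne] <;>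
        simp only [val_idx, val_idxSucc] <;> lia
  · rw [demX_of_not_lt hj, demX_of_not_lt hj, demX_zero]

theorem demX_braid {i : ℕ} (hi : i + 1 + 1 < n) (f : R n) :
    demX n i (demX n (i + 1) (demX n i f)) = demX n (i + 1) (demX n i (demX n (i + 1) f)) := by
  have hi' : i + 1 < n := Nat.lt_of_succ_lt hi
  have root_add_root : root hi' + root hi = X (idx hi') - X (idxSucc hi) := by
    rw [root, root, idx_succ]
    ring
  refine (isDividedDifference_demX hi').braid (isDividedDifference_demX hi) (fun g => ?_)
    ?_ ?_ ?_ f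
  · simp only [rename_rename, ← Equiv.Perm.coe_mul, ← mul_assoc, simpleRefl_braid hi]
  · rw [root_add_root, root, map_sub, rename_X, rename_X, idx_succ hi, simpleRefl_apply_idxSucc,
      simpleRefl_apply_idxSucc_succ]
  · rw [root_add_root, root, map_sub, rename_X, rename_X, ← idx_succ hi, simpleRefl_apply_idx,
      simpleRefl_succ_apply_idx hi]
  · rw [root_add_root, sub_ne_zero]
    exact X_injective.ne ((idx_lt_idxSucc hi').trans (idx_lt_idxSucc hi)).ne

end DemazureOperators

section ReducedWords

theorem demWord_cons (i : ℕ) (l : List ℕ) (f : R n) :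
    demWord n (i :: l) f = demX n i (demWord n l f) := rfl

theorem len_prod_map_simpleRefl_le (l : List ℕ) : len n (l.map (simpleRefl n)).prod ≤ l.length := by
  induction l with
  | nil => exact len_one.le
  | cons i l ih =>
    rw [List.map_cons, List.prod_cons, List.length_cons]
    exact (len_simpleRefl_mul_le _ _).trans (Nat.succ_le_succ ih)

theorem isReducedWord_cons {w : Equiv.Perm (Fin n)} {i : ℕ} {l : List ℕ} :
    IsReducedWord n w (i :: l) ↔
      len n (simpleRefl n i * w) < len n w ∧ IsReducedWord n (simpleRefl n i * w) l := by
  simp only [IsReducedWord, List.map_cons, List.prod_cons, List.length_cons]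
  constructor
  · rintro ⟨rfl, hlen⟩
    have h := len_prod_map_simpleRefl_le (n := n) l
    have h' := len_simpleRefl_mul_le i (l.map (simpleRefl n)).prod
    rw [simpleRefl_mul_cancel_left]
    exact ⟨by lia, rfl, by lia⟩
  · rintro ⟨hlt, hprod, hlen⟩
    rw [hprod, simpleRefl_mul_cancel_left, hlen]
    exact ⟨rfl, len_simpleRefl_mul_add_one hlt⟩

theorem exists_isReducedWord (w : Equiv.Perm (Fin n)) : ∃ l, IsReducedWord n w l := by
  induction hk : len n w generalizing w with
  | zero => exact ⟨[], (len_eq_zero_iff.1 hk).symm, hk.symm⟩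
  | succ k ih =>
    have hw : w ≠ 1 := fun h => by simp [h] at hk
    obtain ⟨i, -, h⟩ := exists_len_simpleRefl_mul_lt hw
    have := len_simpleRefl_mul_add_one h
    obtain ⟨l, hl⟩ := ih (simpleRefl n i * w) (by lia)
    exact ⟨i :: l, isReducedWord_cons.2 ⟨h, hl⟩⟩

theorem len_simpleRefl_mul_simpleRefl_mul_lt {w : Equiv.Perm (Fin n)} {i j : ℕ}
    (hij : i + 1 < j ∨ j + 1 < i) (hj : len n (simpleRefl n j * w) < len n w) :
    len n (simpleRefl n j * (simpleRefl n i * w)) < len n (simpleRefl n i * w) := by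
  have hjn := lt_of_len_simpleRefl_mul_lt hj
  rw [len_simpleRefl_mul_lt_iff hjn] at hj ⊢
  rwa [mul_inv_rev, inv_simpleRefl, Equiv.Perm.mul_apply, Equiv.Perm.mul_apply,
    simpleRefl_apply_of_ne, simpleRefl_apply_of_ne] <;> simp only [val_idx, val_idxSucc] <;> lia

theorem exists_isReducedWord_of_far {w : Equiv.Perm (Fin n)} {i j : ℕ} (hij : i + 1 < j)
    (hi : len n (simpleRefl n i * w) < len n w) (hj : len n (simpleRefl n j * w) < len n w) :
    ∃ l, IsReducedWord n w (i :: j :: l) ∧ IsReducedWord n w (j :: i :: l) := by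
  obtain ⟨l, hl⟩ := exists_isReducedWord (simpleRefl n j * (simpleRefl n i * w))
  refine ⟨l, ?_, ?_⟩ <;> simp only [isReducedWord_cons]
  · exact ⟨hi, len_simpleRefl_mul_simpleRefl_mul_lt (.inl hij) hj, hl⟩
  · refine ⟨hj, len_simpleRefl_mul_simpleRefl_mul_lt (.inr hij) hi, ?_⟩
    rwa [← mul_assoc, simpleRefl_comm hij, mul_assoc]

theorem exists_isReducedWord_of_adjacent {w : Equiv.Perm (Fin n)} {i : ℕ}
    (hi : len n (simpleRefl n i * w) < len n w)
    (hj : len n (simpleRefl n (i + 1) * w) < len n w) :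
    ∃ l, IsReducedWord n w (i :: (i + 1) :: i :: l) ∧
      IsReducedWord n w ((i + 1) :: i :: (i + 1) :: l) := by
  have hin := lt_of_len_simpleRefl_mul_lt hi
  have hjn := lt_of_len_simpleRefl_mul_lt hj
  obtain ⟨l, hl⟩ := exists_isReducedWord
    (simpleRefl n i * (simpleRefl n (i + 1) * (simpleRefl n i * w)))
  have hl' : IsReducedWord n
      (simpleRefl n (i + 1) * (simpleRefl n i * (simpleRefl n (i + 1) * w))) l := by
    simpa only [← mul_assoc, simpleRefl_braid hjn] using hl
  rw [len_simpleRefl_mul_lt_iff hin] at hi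
  rw [len_simpleRefl_mul_lt_iff hjn, idx_succ] at hj
  refine ⟨l, ?_, ?_⟩ <;>
    simp only [isReducedWord_cons, hl, hl', len_simpleRefl_mul_lt_iff hin,
      len_simpleRefl_mul_lt_iff hjn, mul_inv_rev, inv_simpleRefl, Equiv.Perm.mul_apply,
      idx_succ hjn, simpleRefl_apply_idx, simpleRefl_apply_idxSucc, simpleRefl_apply_idxSucc_succ,
      simpleRefl_succ_apply_idx hjn, simpleRefl_succ_apply_idxSucc hjn, and_true]
  · exact ⟨hi, hj.trans hi, hj⟩
  · exact ⟨hj, hj.trans hi, hi⟩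

theorem exists_isReducedWord_demWord_eq {w : Equiv.Perm (Fin n)} {i j : ℕ}
    (hi : len n (simpleRefl n i * w) < len n w) (hj : len n (simpleRefl n j * w) < len n w) :
    ∃ l m, IsReducedWord n w (i :: l) ∧ IsReducedWord n w (j :: m) ∧
      demWord n (i :: l) = demWord n (j :: m) := by
  wlog hij : i ≤ j generalizing i j
  · obtain ⟨l, m, hl, hm, h⟩ := this hj hi (Nat.le_of_not_le hij)
    exact ⟨m, l, hm, hl, h.symm⟩
  obtain rfl | rfl | hij : i = j ∨ j = i + 1 ∨ i + 1 < j := by lia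
  · obtain ⟨l, hl⟩ := exists_isReducedWord (simpleRefl n i * w)
    have hil := isReducedWord_cons.2 ⟨hi, hl⟩
    exact ⟨l, l, hil, hil, rfl⟩
  · obtain ⟨l, hl, hm⟩ := exists_isReducedWord_of_adjacent hi hj
    exact ⟨_, _, hl, hm, funext fun f => demX_braid (lt_of_len_simpleRefl_mul_lt hj) _⟩
  · obtain ⟨l, hl, hm⟩ := exists_isReducedWord_of_far hij hi hj
    exact ⟨_, _, hl, hm, funext fun f => demX_comm hij _⟩

theorem demWord_eq_demWord {w : Equiv.Perm (Fin n)} {l m : List ℕ} (hl : IsReducedWord n w l)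
    (hm : IsReducedWord n w m) : demWord n l = demWord n m := by
  induction hk : len n w generalizing w l m with
  | zero =>
    rw [List.length_eq_zero_iff.1 (hl.2.trans hk), List.length_eq_zero_iff.1 (hm.2.trans hk)]
  | succ k ih =>
    obtain ⟨i, l, rfl⟩ := List.exists_cons_of_length_eq_add_one (hl.2.trans hk)
    obtain ⟨j, m, rfl⟩ := List.exists_cons_of_length_eq_add_one (hm.2.trans hk)
    have cons_eq : ∀ {i : ℕ} {l l' : List ℕ}, IsReducedWord n w (i :: l) →
        IsReducedWord n w (i :: l') → demWord n (i :: l) = demWord n (i :: l') := by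
      intro i l l' h h'
      rw [isReducedWord_cons] at h h'
      have := len_simpleRefl_mul_add_one h.1
      exact congrArg (demX n i ∘ ·) (ih h.2 h'.2 (by lia))
    obtain ⟨l', m', hl', hm', h⟩ :=
      exists_isReducedWord_demWord_eq (isReducedWord_cons.1 hl).1 (isReducedWord_cons.1 hm).1
    exact ((cons_eq hl hl').trans h).trans (cons_eq hm' hm)

theorem dem_eq_demWord {w : Equiv.Perm (Fin n)} {l : List ℕ} (hl : IsReducedWord n w l) :
    dem n w = demWord n l := by
  rw [dem, dif_pos ⟨l, hl⟩]
  exact demWord_eq_demWord (Exists.choose_spec _) hl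

@[simp] theorem dem_one (f : R n) : dem n 1 f = f := by
  have isReducedWord_nil : IsReducedWord n 1 [] := ⟨rfl, len_one.symm⟩
  rw [dem_eq_demWord isReducedWord_nil]
  rfl

theorem demX_dem (i : ℕ) (w : Equiv.Perm (Fin n)) (f : R n) :
    demX n i (dem n w f) =
      if len n w < len n (simpleRefl n i * w) then dem n (simpleRefl n i * w) f else 0 := by
  split_ifs with h
  · obtain ⟨l, hl⟩ := exists_isReducedWord w
    have hil : IsReducedWord n (simpleRefl n i * w) (i :: l) :=
      isReducedWord_cons.2 (by simpa using ⟨h, hl⟩)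
    rw [dem_eq_demWord hl, dem_eq_demWord hil, demWord_cons]
  · by_cases hi : i + 1 < n
    · have descent : len n (simpleRefl n i * w) < len n w := by
        have := len_simpleRefl_mul_eq_or hi w
        lia
      obtain ⟨l, hl⟩ := exists_isReducedWord (simpleRefl n i * w)
      rw [dem_eq_demWord (isReducedWord_cons.2 ⟨descent, hl⟩), demWord_cons, demX_demX]
    · exact demX_of_not_lt hi _

theorem demWord_eq_ite (l : List ℕ) (f : R n) :
    demWord n l f = if len n (l.map (simpleRefl n)).prod = l.length
      then dem n (l.map (simpleRefl n)).prod f else 0 := by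
  induction l with
  | nil => simp [demWord]
  | cons i l ih =>
    have h := len_prod_map_simpleRefl_le (n := n) l
    have h' := len_simpleRefl_mul_le i (l.map (simpleRefl n)).prod
    rw [demWord_cons, ih, List.map_cons, List.prod_cons, List.length_cons]
    split_ifs with hred hred' hred'
    · rw [demX_dem, if_pos (by lia)]
    · rw [demX_dem, if_neg (by lia)]
    · lia
    · exact demX_zero i

end ReducedWords

section Grading

theorem isHomogeneous_demX {f : R n} {d : ℕ} (hf : f.IsHomogeneous (d + 1)) (i : ℕ) :
    (demX n i f).IsHomogeneous d := by
  by_cases hi : i + 1 < n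
  · refine isHomogeneous_of_mul_left (isHomogeneous_root hi) (root_ne_zero hi) ?_
    rw [(isDividedDifference_demX hi).root_mul, add_comm]
    exact hf.sub hf.rename_isHomogeneous
  · rw [demX_of_not_lt hi]
    exact isHomogeneous_zero _ _ _

theorem isHomogeneous_demWord {f : R n} {d : ℕ} {l : List ℕ}
    (hf : f.IsHomogeneous (d + l.length)) : (demWord n l f).IsHomogeneous d := by
  induction l generalizing d with
  | nil => exact hf
  | cons i l ih =>
    rw [List.length_cons, add_comm l.length, ← add_assoc] at hf
    exact isHomogeneous_demX (ih hf) i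

/-- A polynomial is sub-staircase if all of its monomials divide the staircase monomial
`x_1^{n-1} x_2^{n-2} ⋯ x_{n-1}`; this is expressed through the degree in each variable. -/
def IsSubstaircase (f : R n) : Prop := ∀ k : Fin n, degreeOf k f ≤ n - 1 - k

theorem degreeOf_root_add_degreeOf_demX_le {f : R n} {i : ℕ} (hi : i + 1 < n)
    (hf : demX n i f ≠ 0) (k : Fin n) :
    degreeOf k (root hi) + degreeOf k (demX n i f) ≤
      max (degreeOf k f) (degreeOf (simpleRefl n i k) f) := by
  have degreeOf_rename : degreeOf k (rename (simpleRefl n i) f) =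
      degreeOf (simpleRefl n i k) f := by
    simpa [← Equiv.Perm.mul_apply] using
      degreeOf_rename_of_injective (p := f) (simpleRefl n i).injective (simpleRefl n i k)
  rw [← degreeOf_mul_eq (root_ne_zero hi) hf, (isDividedDifference_demX hi).root_mul,
    ← degreeOf_rename]
  exact degreeOf_sub_le k _ _

theorem IsSubstaircase.demX {f : R n} (hf : IsSubstaircase f) (i : ℕ) :
    IsSubstaircase (demX n i f) := by
  intro k
  by_cases hi : i + 1 < n
  swap
  · simp [demX_of_not_lt hi]
  by_cases h0 : _root_.demX n i f = 0
  · simp [h0]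
  have degree_le := degreeOf_root_add_degreeOf_demX_le hi h0 k
  have one_le_degreeOf_root (h : (k : ℕ) = i ∨ (k : ℕ) = i + 1) : 1 ≤ degreeOf k (root hi) :=
    one_le_degreeOf_X_sub_X (idx_lt_idxSucc hi).ne (h.imp Fin.ext Fin.ext)
  have hk := hf k
  have hsk := hf (simpleRefl n i k)
  rw [val_simpleRefl_apply hi] at hsk
  split_ifs at hsk with h h'
  · have := one_le_degreeOf_root (.inl h)
    lia
  · have := one_le_degreeOf_root (.inr h')
    lia
  · lia

theorem IsSubstaircase.demWord {f : R n} (hf : IsSubstaircase f) (l : List ℕ) :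
    IsSubstaircase (demWord n l f) := by
  induction l with
  | nil => exact hf
  | cons i l ih => exact ih.demX i

theorem isSubstaircase_staircase : IsSubstaircase (staircase n) := by
  intro k
  refine (degreeOf_prod_le _ _ _).trans_eq ?_
  rw [Finset.sum_eq_single k, degreeOf_X_self_pow]
  · exact fun b _ hb => degreeOf_X_pow_of_ne _ hb.symm
  · exact fun hk => absurd (Finset.mem_univ k) hk

theorem sum_staircase : ∑ i : Fin n, (n - 1 - (i : ℕ)) = n.choose 2 := by
  rw [Fin.sum_univ_eq_sum_range (fun i => n - 1 - i), Finset.sum_range_reflect (fun i => i),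
    Finset.sum_range_id, Nat.choose_two_right]

theorem isHomogeneous_staircase : (staircase n).IsHomogeneous (n.choose 2) :=
  sum_staircase (n := n) ▸ IsHomogeneous.prod _ _ _ fun _ _ => isHomogeneous_X_pow _ _

end Grading

section SchubertPolynomials

theorem len_inv_mul_w₀ (w : Equiv.Perm (Fin n)) : len n (w⁻¹ * w₀ n) + len n w = n.choose 2 := by
  rw [← len_inv w, len_mul_w₀]

theorem demX_schubert (i : ℕ) (w : Equiv.Perm (Fin n)) :
    demX n i (schubert n w) =
      if len n (w * simpleRefl n i) < len n w then schubert n (w * simpleRefl n i) else 0 := by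
  have h := len_inv_mul_w₀ w
  have h' := len_inv_mul_w₀ (w * simpleRefl n i)
  rw [schubert, schubert, demX_dem, ← mul_assoc, ← inv_simpleRefl i, ← mul_inv_rev, inv_simpleRefl]
  exact if_congr (by lia) rfl rfl

theorem isHomogeneous_schubert (w : Equiv.Perm (Fin n)) :
    (schubert n w).IsHomogeneous (len n w) := by
  obtain ⟨l, hl⟩ := exists_isReducedWord (w⁻¹ * w₀ n)
  rw [schubert, dem_eq_demWord hl]
  apply isHomogeneous_demWord
  rw [hl.2, add_comm, len_inv_mul_w₀]
  exact isHomogeneous_staircase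

theorem constantCoeff_schubert {w : Equiv.Perm (Fin n)} (hw : w ≠ 1) :
    constantCoeff (schubert n w) = 0 := by
  rw [constantCoeff_eq]
  refine (isHomogeneous_schubert w).coeff_eq_zero ?_
  rw [map_zero]
  exact fun h => hw (len_eq_zero_iff.1 h.symm)

theorem isSubstaircase_schubert (w : Equiv.Perm (Fin n)) : IsSubstaircase (schubert n w) := by
  obtain ⟨l, hl⟩ := exists_isReducedWord (w⁻¹ * w₀ n)
  rw [schubert, dem_eq_demWord hl]
  exact isSubstaircase_staircase.demWord l

theorem rename_simpleRefl_prod_X_pow {e : ℕ → ℕ} {i : ℕ} (he : e i = e (i + 1)) :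
    rename (simpleRefl n i) (∏ k : Fin n, X k ^ e k : R n) = ∏ k : Fin n, X k ^ e k := by
  by_cases hi : i + 1 < n
  · rw [map_prod, ← Equiv.prod_comp (simpleRefl n i)]
    refine Finset.prod_congr rfl fun k _ => ?_
    rw [map_pow, rename_X, ← Equiv.Perm.mul_apply, simpleRefl_mul_self, Equiv.Perm.one_apply,
      val_simpleRefl_apply hi]
    split_ifs with h h'
    · rw [h, he]
    · rw [h', he]
    · rfl
  · rw [simpleRefl_of_not_lt hi, Equiv.Perm.coe_one, rename_id_apply]

theorem demX_prod_X_pow {e : ℕ → ℕ} {i : ℕ} (hi : i + 1 < n) (he : e i = e (i + 1) + 1) :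
    demX n i (∏ k : Fin n, X k ^ e k) =
      ∏ k : Fin n, X k ^ Function.update e i (e (i + 1)) k := by
  have factor : (∏ k : Fin n, X k ^ e k : R n) =
      X (idx hi) * ∏ k : Fin n, X k ^ Function.update e i (e (i + 1)) k := by
    rw [← Finset.mul_prod_erase _ _ (Finset.mem_univ (idx hi)),
      ← Finset.mul_prod_erase _ (fun k : Fin n => X k ^ Function.update e i (e (i + 1)) k)
        (Finset.mem_univ (idx hi)), val_idx, Function.update_self, he, pow_succ', mul_assoc]
    congr 2
    refine Finset.prod_congr rfl fun k hk => ?_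
    rw [Function.update_of_ne]
    exact fun h => Finset.ne_of_mem_erase hk (Fin.ext h)
  have invariant := rename_simpleRefl_prod_X_pow (n := n)
    (e := Function.update e i (e (i + 1))) (i := i) (by simp)
  apply (isDividedDifference_demX hi).eq_of_root_mul
  rw [factor, map_mul, invariant, rename_X, simpleRefl_apply_idx, root, sub_mul]

theorem sum_update_add_one {e : ℕ → ℕ} {i : ℕ} (hi : i < n) {a : ℕ} (he : e i = a + 1) :
    ∑ k : Fin n, Function.update e i a k + 1 = ∑ k : Fin n, e k := by
  have e_eq (k : Fin n) : e k = Function.update e i a k + if k = ⟨i, hi⟩ then 1 else 0 := by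
    by_cases hk : k = ⟨i, hi⟩
    · simp [hk, he]
    · rw [Function.update_of_ne fun h => hk (Fin.ext h), if_neg hk, add_zero]
  simp only [e_eq, Finset.sum_add_distrib, Finset.sum_ite_eq', Finset.mem_univ, if_true]

theorem exists_first_descent {e : ℕ → ℕ} (hstep : ∀ k, e k ≤ e (k + 1) + 1)
    (hzero : ∀ k, n ≤ k + 1 → e k = 0) (hsum : ∑ k : Fin n, e k ≠ 0) :
    ∃ i, i + 1 < n ∧ e i = e (i + 1) + 1 ∧ ∀ k < i, e k ≤ e (k + 1) := by
  have exists_descent : ∃ k, e (k + 1) < e k := by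
    by_contra! hle
    have e_eq_zero (k : ℕ) : e k = 0 :=
      Nat.le_zero.1 (hzero (k + n) (by lia) ▸ monotone_nat_of_le_succ hle (Nat.le_add_right k n))
    simp [e_eq_zero] at hsum
  have descent := Nat.find_spec exists_descent
  refine ⟨Nat.find exists_descent, ?_, ?_, fun k hk => not_lt.1 (Nat.find_min exists_descent hk)⟩
  · by_contra! h
    have := hzero _ h
    lia
  · have := hstep (Nat.find exists_descent)
    lia

-- Lowering the exponent at the first descent of `e` is a Demazure operator and keeps the
-- hypotheses on `e`.
theorem exists_demWord_prod_X_pow_eq_one {e : ℕ → ℕ} (hanti : ∀ k, e (k + 1) ≤ e k)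
    (hstep : ∀ k, e k ≤ e (k + 1) + 1) (hzero : ∀ k, n ≤ k + 1 → e k = 0) :
    ∃ l : List ℕ, l.length = ∑ k : Fin n, e k ∧ demWord n l (∏ k : Fin n, X k ^ e k) = 1 := by
  induction hs : ∑ k : Fin n, e k generalizing e with
  | zero =>
    have e_eq_zero : ∀ k : Fin n, e k = 0 := by simpa using hs
    exact ⟨[], rfl, by simp [demWord, e_eq_zero]⟩
  | succ s ih =>
    obtain ⟨i, hi, he, no_earlier_descent⟩ :=
      exists_first_descent hstep hzero (hs.trans_ne s.succ_ne_zero)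
    have sum_eq : ∑ k : Fin n, Function.update e i (e (i + 1)) k = s := by
      have := sum_update_add_one (n := n) (Nat.lt_of_succ_lt hi) he
      lia
    have update_hypotheses (k : ℕ) :
        let e' := Function.update e i (e (i + 1))
        e' (k + 1) ≤ e' k ∧ e' k ≤ e' (k + 1) + 1 ∧ (n ≤ k + 1 → e' k = 0) := by
      have := hanti k
      have := hstep k
      have := no_earlier_descent k
      have := hzero k
      simp only [Function.update_apply]
      split_ifs <;> grind
    obtain ⟨l, hlen, hl⟩ := ih (fun k => (update_hypotheses k).1)
      (fun k => (update_hypotheses k).2.1) (fun k => (update_hypotheses k).2.2) sum_eq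
    refine ⟨l ++ [i], by simp [hlen], ?_⟩
    rw [← demX_prod_X_pow hi he] at hl
    simpa [demWord] using hl

@[simp] theorem schubert_one : schubert n 1 = 1 := by
  obtain ⟨l, hlen, hl⟩ := exists_demWord_prod_X_pow_eq_one (n := n) (e := fun k => n - 1 - k)
    (by lia) (by lia) (by lia)
  change demWord n l (staircase n) = 1 at hl
  rw [sum_staircase] at hlen
  rw [demWord_eq_ite, hlen] at hl
  split_ifs at hl with hprod
  · rwa [len_eq_choose_two_iff.1 hprod, ← one_mul (w₀ n), ← inv_one] at hl
  · exact absurd hl zero_ne_one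

theorem dem_schubert (v w : Equiv.Perm (Fin n)) :
    dem n v (schubert n w) =
      if len n (w * v⁻¹) + len n v = len n w then schubert n (w * v⁻¹) else 0 := by
  induction hk : len n v generalizing v with
  | zero => simp [len_eq_zero_iff.1 hk]
  | succ k ih =>
    have hv : v ≠ 1 := fun h => by simp [h] at hk
    obtain ⟨i, hi, hlt⟩ := exists_len_simpleRefl_mul_lt hv
    obtain ⟨u, rfl⟩ : ∃ u, v = simpleRefl n i * u := ⟨simpleRefl n i * v, by simp⟩
    rw [simpleRefl_mul_cancel_left] at hlt
    have hu := len_simpleRefl_mul_eq_or hi u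
    have hwu := len_mul_simpleRefl_eq_or (w * u⁻¹) hi
    have len_w_le := len_mul_le (w * u⁻¹) u
    rw [inv_mul_cancel_right] at len_w_le
    have dem_v := demX_dem i u (schubert n w)
    rw [if_pos hlt, ih u (by lia)] at dem_v
    rw [← dem_v, mul_inv_rev, inv_simpleRefl, ← mul_assoc]
    split_ifs with h h' h'
    · rw [demX_schubert, if_pos (by lia)]
    · rw [demX_schubert, if_neg (by lia)]
    · lia
    · exact demX_zero i

theorem dem_schubert_of_len_le {v w : Equiv.Perm (Fin n)} (h : len n w ≤ len n v) :
    dem n v (schubert n w) = if v = w then 1 else 0 := by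
  rw [dem_schubert]
  split_ifs with hlen hvw hvw
  · rw [hvw, mul_inv_cancel, schubert_one]
  · exact absurd (mul_inv_eq_one.1 (len_eq_zero_iff.1 (by lia))).symm hvw
  · simp [hvw] at hlen
  · rfl

end SchubertPolynomials

section Spanning

theorem isSymmetric_of_rename_simpleRefl {f : R n}
    (hf : ∀ i, i + 1 < n → rename (simpleRefl n i) f = f) : f.IsSymmetric := by
  intro w
  obtain ⟨l, rfl, -⟩ := exists_isReducedWord w
  induction l with
  | nil => simp
  | cons i l ih =>
    rw [List.map_cons, List.prod_cons, Equiv.Perm.coe_mul, ← rename_rename, ih]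
    by_cases hi : i + 1 < n
    · exact hf i hi
    · rw [simpleRefl_of_not_lt hi, Equiv.Perm.coe_one, rename_id_apply]

theorem isSymmetric_of_demX_eq_zero {f : R n} (hf : ∀ i, demX n i f = 0) : f.IsSymmetric :=
  isSymmetric_of_rename_simpleRefl fun i hi => (isDividedDifference_demX hi).eq_zero_iff.1 (hf i)

/-- The Demazure operator `∂_w` as an `R^{S_n}`-linear endomorphism of `R`. -/
def demLinear (n : ℕ) (w : Equiv.Perm (Fin n)) : R n →ₗ[Ssub n] R n :=
  ((exists_isReducedWord w).choose.map (demXLinear n)).prod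

@[simp] theorem demLinear_apply (w : Equiv.Perm (Fin n)) (f : R n) :
    demLinear n w f = dem n w f := by
  rw [demLinear, dem_eq_demWord (exists_isReducedWord w).choose_spec]
  generalize (exists_isReducedWord w).choose = l
  induction l with
  | nil => rfl
  | cons i l ih => exact congrArg (demX n i) ih

theorem mem_span_schubert_of_dem_eq_zero {m : ℕ} {f : R n}
    (hf : ∀ v, m ≤ len n v → dem n v f = 0) :
    f ∈ Submodule.span (Ssub n) (Set.range (schubert n)) := by
  induction m generalizing f with
  | zero =>
    rw [← dem_one f, hf 1 (Nat.zero_le _)]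
    exact Submodule.zero_mem _
  | succ m ih =>
    have symmetric (w : Equiv.Perm (Fin n)) (hw : m ≤ len n w) : (dem n w f).IsSymmetric := by
      refine isSymmetric_of_demX_eq_zero fun i => ?_
      rw [demX_dem]
      split_ifs with h
      · exact hf _ (by lia)
      · rfl
    let c : Equiv.Perm (Fin n) → Ssub n := fun w =>
      if hw : len n w = m then ⟨dem n w f, symmetric w hw.ge⟩ else 0
    have combination_mem : ∑ w, c w • schubert n w ∈
        Submodule.span (Ssub n) (Set.range (schubert n)) :=
      Submodule.sum_mem _ fun w _ => Submodule.smul_mem _ _ (Submodule.subset_span ⟨w, rfl⟩)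
    have dem_combination (v : Equiv.Perm (Fin n)) (hv : m ≤ len n v) :
        dem n v (∑ w, c w • schubert n w) = dem n v f := by
      rw [← demLinear_apply, map_sum, Finset.sum_eq_single v, map_smul, demLinear_apply,
        dem_schubert_of_len_le le_rfl, if_pos rfl]
      · rcases hv.eq_or_lt with hm | hm
        · rw [show c v = _ from dif_pos hm.symm, Algebra.smul_def, mul_one]
          rfl
        · rw [show c v = 0 from dif_neg hm.ne', zero_smul, hf v hm]
      · intro w _ hwv
        rw [map_smul, demLinear_apply]
        by_cases hw : len n w = m
        · rw [dem_schubert_of_len_le (hw.trans_le hv), if_neg hwv.symm, smul_zero]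
        · rw [show c w = 0 from dif_neg hw, zero_smul]
      · exact fun h => absurd (Finset.mem_univ v) h
    rw [← sub_add_cancel f (∑ w, c w • schubert n w)]
    refine Submodule.add_mem _ (ih fun v hv => ?_) combination_mem
    rw [← demLinear_apply, map_sub, demLinear_apply, demLinear_apply, dem_combination v hv,
      sub_self]

theorem span_schubert : Submodule.span (Ssub n) (Set.range (schubert n)) = ⊤ := by
  refine eq_top_iff.2 fun f _ => ?_
  refine mem_span_schubert_of_dem_eq_zero (m := n.choose 2 + 1) fun v hv => ?_
  exact absurd (len_le_choose_two v) (by lia)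

end Spanning

section TensorDemazure

theorem aeval_neg_X_of_isHomogeneous {σ A : Type*} [CommRing A] {f : MvPolynomial σ A} {d : ℕ}
    (hf : f.IsHomogeneous d) :
    aeval (fun i => -(X i : MvPolynomial σ A)) f = (-1 : ℤ) ^ d • f := by
  conv_lhs => rw [f.as_sum]
  conv_rhs => rw [f.as_sum]
  rw [map_sum, Finset.smul_sum]
  refine Finset.sum_congr rfl fun m hm => ?_
  have degree_eq : m.degree = d := by
    rw [← hf (mem_support_iff.1 hm), Finsupp.degree_eq_weight_one]
    rfl
  rw [aeval_monomial, algebraMap_eq, monomial_eq, zsmul_eq_mul, mul_left_comm]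
  simp [← degree_eq, Finsupp.prod, neg_pow (X _ : MvPolynomial σ A), Finset.prod_mul_distrib,
    Finset.prod_pow_eq_pow_sum, Finsupp.degree_apply]

/-- The summand `𝔖_v(-x) ⊗ 𝔖_u(x)`, with `v = u w⁻¹`, of `S_w`, where the sign has been extracted
from the homogeneous polynomial `𝔖_v(-x)`; it is `0` if `w = v⁻¹ u` is not length-additive. The
factorization with `u = w` is included. -/
def swSummand (w u : Equiv.Perm (Fin n)) : T n :=
  if len n (u * w⁻¹) + len n u = len n w then
    (-1 : ℤ) ^ len n (u * w⁻¹) • (schubert n (u * w⁻¹) ⊗ₜ[Ssub n] schubert n u)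
  else 0

theorem swSummand_self (w : Equiv.Perm (Fin n)) : swSummand w w = 1 ⊗ₜ schubert n w := by
  simp [swSummand]

theorem Sw_eq_sum (w : Equiv.Perm (Fin n)) : Sw n w = ∑ u, swSummand w u := by
  have factorization_iff (u v : Equiv.Perm (Fin n)) : w = v⁻¹ * u ↔ v = u * w⁻¹ := by
    rw [eq_inv_mul_iff_mul_eq, eq_mul_inv_iff_mul_eq]
  rw [Sw, Finset.sum_filter, Fintype.sum_prod_type, ← Finset.add_sum_erase _ _ (Finset.mem_univ w)]
  simp only [factorization_iff, ite_and, Finset.sum_ite_eq', Finset.mem_univ, if_true]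
  rw [← swSummand_self, ← Finset.add_sum_erase _ _ (Finset.mem_univ w), if_neg (lt_irrefl _),
    zero_add]
  refine congrArg _ (Finset.sum_congr rfl fun u hu => ?_)
  have len_pos : len n (u * w⁻¹) ≠ 0 := fun h =>
    Finset.ne_of_mem_erase hu (mul_inv_eq_one.1 (len_eq_zero_iff.1 h))
  rw [← ite_and, swSummand, aeval_neg_X_of_isHomogeneous (isHomogeneous_schubert _), smul_tmul']
  exact if_congr (by lia) rfl rfl

/-- The Demazure operator `∂_i` acting on the left tensor factor. -/
def leftDemX (n i : ℕ) : T n →ₗ[Ssub n] T n := (demXLinear n i).rTensor (R n)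

/-- The Demazure operator `∂_i` acting on the right tensor factor. -/
def rightDemX (n i : ℕ) : T n →ₗ[Ssub n] T n := (demXLinear n i).lTensor (R n)

@[simp] theorem leftDemX_tmul (i : ℕ) (f g : R n) :
    leftDemX n i (f ⊗ₜ g) = demX n i f ⊗ₜ g := rfl

@[simp] theorem rightDemX_tmul (i : ℕ) (f g : R n) :
    rightDemX n i (f ⊗ₜ g) = f ⊗ₜ demX n i g := rfl

theorem len_le_len_mul_inv_add (w u : Equiv.Perm (Fin n)) :
    len n w ≤ len n (u * w⁻¹) + len n u := by
  simpa [← len_inv (u * w⁻¹)] using len_mul_le (u * w⁻¹)⁻¹ u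

theorem rightDemX_swSummand {i : ℕ} (hi : i + 1 < n) (w u : Equiv.Perm (Fin n)) :
    rightDemX n i (swSummand w u) =
      if len n (w * simpleRefl n i) < len n w then
        swSummand (w * simpleRefl n i) (u * simpleRefl n i) else 0 := by
  have quotient_eq : u * simpleRefl n i * (w * simpleRefl n i)⁻¹ = u * w⁻¹ := by simp [mul_assoc]
  have additive_iff : len n (u * w⁻¹) + len n u = len n w ∧
      len n (u * simpleRefl n i) < len n u ↔
      len n (w * simpleRefl n i) < len n w ∧
        len n (u * w⁻¹) + len n (u * simpleRefl n i) = len n (w * simpleRefl n i) := by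
    have hu := len_mul_simpleRefl_eq_or u hi
    have hw := len_mul_simpleRefl_eq_or w hi
    have hwu := len_le_len_mul_inv_add w u
    have hwu' := len_le_len_mul_inv_add (w * simpleRefl n i) (u * simpleRefl n i)
    rw [quotient_eq] at hwu'
    lia
  simp only [swSummand, quotient_eq, apply_ite (rightDemX n i), map_zsmul, map_zero, rightDemX_tmul,
    demX_schubert, tmul_ite, smul_ite, smul_zero, ← ite_and]
  exact if_congr additive_iff rfl rfl

theorem rightDemX_Sw {i : ℕ} (hi : i + 1 < n) (w : Equiv.Perm (Fin n)) :
    rightDemX n i (Sw n w) =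
      if len n (w * simpleRefl n i) < len n w then Sw n (w * simpleRefl n i) else 0 := by
  simp only [Sw_eq_sum, map_sum, rightDemX_swSummand hi]
  split_ifs
  · exact Equiv.sum_comp (Equiv.mulRight (simpleRefl n i)) (swSummand (w * simpleRefl n i))
  · exact Finset.sum_const_zero

theorem leftDemX_swSummand {i : ℕ} (hi : i + 1 < n) (w u : Equiv.Perm (Fin n)) :
    leftDemX n i (swSummand w u) =
      -if len n (simpleRefl n i * w) < len n w then swSummand (simpleRefl n i * w) u else 0 := by
  have quotient_eq : u * (simpleRefl n i * w)⁻¹ = u * w⁻¹ * simpleRefl n i := by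
    rw [mul_inv_rev, inv_simpleRefl, mul_assoc]
  have hv := len_mul_simpleRefl_eq_or (u * w⁻¹) hi
  have additive_iff : len n (u * w⁻¹) + len n u = len n w ∧
      len n (u * w⁻¹ * simpleRefl n i) < len n (u * w⁻¹) ↔
      len n (simpleRefl n i * w) < len n w ∧
        len n (u * w⁻¹ * simpleRefl n i) + len n u = len n (simpleRefl n i * w) := by
    have hw := len_simpleRefl_mul_eq_or hi w
    have hwu := len_le_len_mul_inv_add w u
    have hwu' := len_le_len_mul_inv_add (simpleRefl n i * w) u
    rw [quotient_eq] at hwu'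
    lia
  simp only [swSummand, quotient_eq, apply_ite (leftDemX n i), map_zsmul, map_zero, leftDemX_tmul,
    demX_schubert, ite_tmul, smul_ite, smul_zero, ← ite_and]
  rw [← if_congr additive_iff rfl rfl]
  split_ifs with h
  · have len_eq : len n (u * w⁻¹) = len n (u * w⁻¹ * simpleRefl n i) + 1 := by lia
    rw [len_eq, pow_succ, mul_neg_one, neg_smul]
  · exact neg_zero.symm

theorem leftDemX_Sw {i : ℕ} (hi : i + 1 < n) (w : Equiv.Perm (Fin n)) :
    leftDemX n i (Sw n w) =
      -if len n (simpleRefl n i * w) < len n w then Sw n (simpleRefl n i * w) else 0 := by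
  simp only [Sw_eq_sum, map_sum, leftDemX_swSummand hi, Finset.sum_neg_distrib]
  split_ifs
  · rfl
  · rw [Finset.sum_const_zero]

theorem Fw_tmul (w : Equiv.Perm (Fin n)) (f g : R n) : Fw n w (f ⊗ₜ g) = f * rename w g :=
  Algebra.TensorProduct.productMap_apply_tmul _ _ f g

theorem Fw_one_tmul (f g : R n) : Fw n 1 (f ⊗ₜ g) = f * g := by simp [Fw_tmul]

theorem Fw_mul_simpleRefl {i : ℕ} (hi : i + 1 < n) (w : Equiv.Perm (Fin n)) (z : T n) :
    Fw n (w * simpleRefl n i) z = Fw n w z - rename w (root hi) * Fw n w (rightDemX n i z) := by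
  induction z using TensorProduct.induction_on with
  | zero => simp
  | tmul f g =>
    rw [rightDemX_tmul, Fw_tmul, Fw_tmul, Fw_tmul, mul_left_comm, ← map_mul,
      (isDividedDifference_demX hi).root_mul, map_sub, rename_rename, Equiv.Perm.coe_mul]
    ring
  | add x y hx hy =>
    rw [map_add, map_add, map_add, map_add, hx, hy]
    ring

theorem demX_Fw_one {i : ℕ} (hi : i + 1 < n) (z : T n) :
    demX n i (Fw n 1 z) = Fw n 1 (leftDemX n i z) + Fw n 1 (rightDemX n i z) -
      root hi * Fw n 1 (rightDemX n i (leftDemX n i z)) := by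
  induction z using TensorProduct.induction_on with
  | zero => simp
  | tmul f g =>
    simp only [leftDemX_tmul, rightDemX_tmul, Fw_one_tmul, (isDividedDifference_demX hi).map_mul]
  | add x y hx hy =>
    simp only [map_add, (isDividedDifference_demX hi).map_add, hx, hy]
    ring

end TensorDemazure

section Triangularity

theorem Fw_one_Sw_one : Fw n 1 (Sw n 1) = 1 := by
  rw [Sw_eq_sum, Finset.sum_eq_single 1]
  · rw [swSummand_self, Fw_one_tmul, schubert_one, mul_one]
  · intro u _ hu
    have : len n u ≠ 0 := len_eq_zero_iff.not.2 hu
    simp [swSummand, this]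
  · exact fun h => absurd (Finset.mem_univ _) h

theorem constantCoeff_Fw_one_Sw {w : Equiv.Perm (Fin n)} (hw : w ≠ 1) :
    constantCoeff (Fw n 1 (Sw n w)) = 0 := by
  rw [Sw_eq_sum, map_sum, map_sum]
  refine Finset.sum_eq_zero fun u _ => ?_
  rw [swSummand, apply_ite (Fw n 1), map_zsmul, Fw_one_tmul, apply_ite constantCoeff, map_zsmul,
    map_mul]
  obtain rfl | hu := eq_or_ne u 1
  · simp [constantCoeff_schubert (inv_ne_one.2 hw)]
  · simp [constantCoeff_schubert hu]

theorem degreeOf_last_Fw_one_Sw (w : Equiv.Perm (Fin (n + 1))) :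
    degreeOf (Fin.last n) (Fw (n + 1) 1 (Sw (n + 1) w)) = 0 := by
  have degreeOf_schubert (v : Equiv.Perm (Fin (n + 1))) :
      degreeOf (Fin.last n) (schubert (n + 1) v) = 0 := by
    simpa using isSubstaircase_schubert v (Fin.last n)
  rw [Sw_eq_sum, map_sum, ← Nat.le_zero]
  refine (degreeOf_sum_le _ _ _).trans (Finset.sup_le fun u _ => ?_)
  have degreeOf_product : degreeOf (Fin.last n) (schubert (n + 1) (u * w⁻¹) * schubert (n + 1) u) ≤
      0 := by
    simpa [degreeOf_schubert] using
      degreeOf_mul_le (Fin.last n) (schubert (n + 1) (u * w⁻¹)) (schubert (n + 1) u)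
  rw [swSummand, apply_ite (Fw (n + 1) 1), map_zsmul, Fw_one_tmul, map_zero]
  split_ifs
  · rcases neg_one_pow_eq_or ℤ (len (n + 1) (u * w⁻¹)) with h | h
    · rwa [h, one_smul]
    · rwa [h, neg_smul, one_smul, degreeOf_neg]
  · simp

theorem demX_Fw_one_Sw_eq_zero {w : Equiv.Perm (Fin n)} (hw : w ≠ 1)
    (vanish : ∀ v, len n v < len n w → v ≠ 1 → Fw n 1 (Sw n v) = 0) (i : ℕ) :
    demX n i (Fw n 1 (Sw n w)) = 0 := by
  by_cases hi : i + 1 < n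
  swap
  · exact demX_of_not_lt hi _
  rw [demX_Fw_one hi, leftDemX_Sw hi, rightDemX_Sw hi]
  obtain rfl | hws := eq_or_ne w (simpleRefl n i)
  · simp [rightDemX_Sw hi, apply_ite (rightDemX n i)]
  have hleft : Fw n 1 (if len n (simpleRefl n i * w) < len n w then
      Sw n (simpleRefl n i * w) else 0) = 0 := by
    split_ifs with h
    · exact vanish _ h fun h1 => hws (by simpa using eq_inv_of_mul_eq_one_right h1)
    · exact map_zero _
  have hright : Fw n 1 (if len n (w * simpleRefl n i) < len n w then
      Sw n (w * simpleRefl n i) else 0) = 0 := by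
    split_ifs with h
    · exact vanish _ h fun h1 => hws (by simpa using eq_inv_of_mul_eq_one_left h1)
    · exact map_zero _
  have hboth : Fw n 1 (rightDemX n i (if len n (simpleRefl n i * w) < len n w then
      Sw n (simpleRefl n i * w) else 0)) = 0 := by
    rw [apply_ite (rightDemX n i), rightDemX_Sw hi]
    split_ifs with h h'
    · refine vanish _ (h'.trans h) fun h1 => hw ?_
      have := eq_inv_of_mul_eq_one_left h1
      rw [← simpleRefl_mul_cancel_left i w, this]
      simp
    · exact map_zero _
    · rw [map_zero, map_zero]
  simp only [map_neg, hleft, hright, hboth]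
  simp

theorem Fw_one_Sw_of_ne_one {w : Equiv.Perm (Fin n)} (hw : w ≠ 1) : Fw n 1 (Sw n w) = 0 := by
  induction hk : len n w using Nat.strong_induction_on generalizing w with
  | _ k ih =>
    have symmetric : (Fw n 1 (Sw n w)).IsSymmetric :=
      isSymmetric_of_demX_eq_zero <|
        demX_Fw_one_Sw_eq_zero hw fun v hv hv1 => ih _ (hk ▸ hv) hv1 rfl
    cases n with
    | zero => exact absurd (Subsingleton.elim w 1) hw
    | succ m =>
      rw [eq_C_of_isSymmetric_of_degreeOf_eq_zero symmetric (degreeOf_last_Fw_one_Sw w),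
        constantCoeff_Fw_one_Sw hw, C_0]

theorem Fw_Sw_triangular (w : Equiv.Perm (Fin n)) :
    Fw n w (Sw n w) ≠ 0 ∧ ∀ u, len n w ≤ len n u → u ≠ w → Fw n w (Sw n u) = 0 := by
  induction hk : len n w generalizing w with
  | zero =>
    rw [len_eq_zero_iff.1 hk]
    exact ⟨Fw_one_Sw_one ▸ one_ne_zero, fun u _ hu => Fw_one_Sw_of_ne_one hu⟩
  | succ k ih =>
    obtain ⟨i, hi, hlt⟩ := exists_len_mul_simpleRefl_lt (w := w) fun h => by simp [h] at hk
    obtain ⟨v, rfl⟩ : ∃ v, w = v * simpleRefl n i := ⟨w * simpleRefl n i, by simp⟩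
    rw [mul_simpleRefl_cancel_right] at hlt
    have hlen := len_mul_simpleRefl_eq_or v hi
    obtain ⟨diagonal, vanish⟩ := ih v (by lia)
    constructor
    · have rename_root_ne_zero : rename v (root hi) ≠ 0 :=
        (map_ne_zero_iff _ (rename_injective _ v.injective)).2 (root_ne_zero hi)
      rw [Fw_mul_simpleRefl hi, vanish _ (by lia) fun h => hlt.ne (congrArg (len n) h.symm),
        zero_sub, neg_ne_zero, rightDemX_Sw hi, mul_simpleRefl_cancel_right, if_pos hlt]
      exact mul_ne_zero rename_root_ne_zero diagonal
    · intro u hu hne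
      have hulen := len_mul_simpleRefl_eq_or u hi
      rw [Fw_mul_simpleRefl hi, vanish u (by lia) (by rintro rfl; lia), zero_sub, rightDemX_Sw hi]
      split_ifs
      · rw [vanish _ (by lia), mul_zero, neg_zero]
        rintro rfl
        simp at hne
      · simp

end Triangularity

section KernelOfFw

/-- The homomorphism `F_w`, linear for the left `R`-module structure. -/
def FwLinear (n : ℕ) (w : Equiv.Perm (Fin n)) : T n →ₗ[R n] R n :=
  (Algebra.TensorProduct.productLeftAlgHom (AlgHom.id (R n) (R n)) (renameS n w)).toLinearMap

@[simp] theorem FwLinear_apply (w : Equiv.Perm (Fin n)) (z : T n) : FwLinear n w z = Fw n w z := rfl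

theorem one_tmul_schubert_mem_span_range_Sw (w : Equiv.Perm (Fin n)) :
    1 ⊗ₜ schubert n w ∈ Submodule.span (R n) (Set.range (Sw n)) := by
  induction hk : len n w using Nat.strong_induction_on generalizing w with
  | _ k ih =>
    rw [eq_sub_of_add_eq (Sw.eq_1 n w).symm]
    refine Submodule.sub_mem _ (Submodule.subset_span ⟨w, rfl⟩) (Submodule.sum_mem _ ?_)
    rintro ⟨u, v⟩ hp
    have hlt : len n u < len n w := (Finset.mem_filter.1 hp).2.2.1
    rw [← mul_one (aeval _ _), ← smul_eq_mul, ← smul_tmul']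
    exact Submodule.smul_mem _ _ (ih _ (hk ▸ hlt) u rfl)

theorem span_range_Sw : Submodule.span (R n) (Set.range (Sw n)) = ⊤ := by
  rw [eq_top_iff, ← Submodule.baseChange_top, ← span_schubert, Submodule.baseChange_span,
    Submodule.span_le]
  rintro _ ⟨_, ⟨w, rfl⟩, rfl⟩
  exact one_tmul_schubert_mem_span_range_Sw w

theorem mem_span_Sw_iff {j : ℕ} {z : T n} :
    z ∈ Submodule.span (R n) {z : T n | ∃ w, j ≤ len n w ∧ z = Sw n w} ↔
      ∀ w : Equiv.Perm (Fin n), len n w < j → Fw n w z = 0 := by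
  have image_eq : {z : T n | ∃ w, j ≤ len n w ∧ z = Sw n w} = Sw n '' {w | j ≤ len n w} := by
    ext
    simp [eq_comm]
  rw [image_eq, span_image_eq_iInf_ker_of_triangular (Sw n) (FwLinear n) (len n) span_range_Sw
    (fun w => (Fw_Sw_triangular w).1) (fun w u => (Fw_Sw_triangular w).2 u)]
  simp

end KernelOfFw

end Schubert

/-- For `0 ≤ j ≤ n(n-1)/2 + 1`, the left `R`-submodule `Γ_j` of
`R ⊗_{R^{S_n}} R` spanned by `{S_w : ℓ(w) ≥ j}` equals the kernel of the `R`-bimodule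
homomorphism `⊕_{ℓ(w) < j} F_w`; in particular `Γ_j` is stable under the right
`R`-action `z ↦ z · (1 ⊗ g)`. -/
theorem statement6 (n j : ℕ) (hj : j ≤ n.choose 2 + 1) :
    (∀ z : T n,
        z ∈ Submodule.span (R n) {z : T n | ∃ w, j ≤ len n w ∧ z = Sw n w} ↔
        ∀ w : Equiv.Perm (Fin n), len n w < j → Fw n w z = 0) ∧
    (∀ z ∈ Submodule.span (R n) {z : T n | ∃ w, j ≤ len n w ∧ z = Sw n w}, ∀ g : R n,
        z * ((1 : R n) ⊗ₜ[Ssub n] g) ∈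
          Submodule.span (R n) {z : T n | ∃ w, j ≤ len n w ∧ z = Sw n w}) := by
  refine ⟨fun z => Schubert.mem_span_Sw_iff, fun z hz g => ?_⟩
  rw [Schubert.mem_span_Sw_iff] at hz ⊢
  exact fun w hw => by rw [map_mul, hz w hw, zero_mul]
end
end

section
/- Let Φ : T → T' be an exact (triangulated) ℂ-linear functor between ℂ-linear triangulated categories, and let P_σ, P_ω be slicings on T' with σ ⪅ ω. For θ ∈ ℝ define full subcategories of T by Q_σ(θ) = {E ∈ T : Φ(E) ∈ P_σ(θ)} and Q_ω(θ) = {E ∈ T : Φ(E) ∈ P_ω(θ)}. If the families Q_σ and Q_ω are slicings on T, then Q_σ ⪅ Q_ω. (This is the slicing-level content of Lemma 3.3 of the paper, which is applied there with Φ = f^* to compare the pushforward pre-stability conditions f_*σ ⪅ f_*ω, and with Φ = f_* to compare the pullbacks f^*σ ⪅ f^*ω, for a finite morphism f of smooth projective varieties.) -/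
open CategoryTheory Limits Pretriangulated

universe v u

variable (C : Type u) [Category.{v} C] [Preadditive C] [HasZeroObject C]
  [Linear ℂ C]
  [HasShift C ℤ] [∀ n : ℤ, (shiftFunctor C n).Additive] [Pretriangulated C]

/-- A slicing on a triangulated category (Bridgeland): a collection of full additive
subcategories `P(θ)`, `θ ∈ ℝ`, each given by its set of objects, such that
`P(θ)[1] = P(θ+1)`, there are no nonzero morphisms from `P(θ₁)` to `P(θ₂)` for `θ₁ > θ₂`,
and every nonzero object has a Harder–Narasimhan filtration by distinguished triangles with
nonzero factors of strictly decreasing phases. -/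
structure Slicing where
  /-- the set of objects of the full additive subcategory `P(θ)` -/
  P : ℝ → Set C
  /-- `P(θ)` contains the zero objects (it is an additive subcategory) -/
  zero_mem : ∀ (θ : ℝ) (E : C), IsZero E → E ∈ P θ
  /-- `P(θ)[1] = P(θ + 1)` -/
  shift_mem : ∀ (θ : ℝ) (E : C), E ∈ P θ ↔ (E⟦(1 : ℤ)⟧ ∈ P (θ + 1))
  /-- if `θ₁ > θ₂`, `F₁ ∈ P(θ₁)` and `F₂ ∈ P(θ₂)`, then `Hom(F₁, F₂) = 0` -/
  hom_zero : ∀ (θ₁ θ₂ : ℝ), θ₂ < θ₁ → ∀ (F₁ F₂ : C), F₁ ∈ P θ₁ → F₂ ∈ P θ₂ →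
    ∀ f : F₁ ⟶ F₂, f = 0
  /-- Harder–Narasimhan filtrations: every nonzero object `E` admits a finite sequence of
  distinguished triangles `E_{i-1} → E_i → A_i → E_{i-1}[1]` with `E_0 = 0`, `E_m = E`, and
  nonzero factors `A_i ∈ P(θ_i)` with `θ_1 > θ_2 > ⋯ > θ_m` -/
  hn : ∀ E : C, ¬ IsZero E →
    ∃ (m : ℕ) (Eseq : ℕ → C) (A : ℕ → C) (θ : ℕ → ℝ),
      IsZero (Eseq 0) ∧ Eseq m = E ∧
      (∀ i : ℕ, 1 ≤ i → i < m → θ (i + 1) < θ i) ∧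
      (∀ i : ℕ, 1 ≤ i → i ≤ m →
        ¬ IsZero (A i) ∧ A i ∈ P (θ i) ∧
        ∃ (f : Eseq (i - 1) ⟶ Eseq i) (g : Eseq i ⟶ A i)
          (h : A i ⟶ (Eseq (i - 1))⟦(1 : ℤ)⟧),
          Triangle.mk f g h ∈ distinguishedTriangles)

variable {C}

/-- The extension-closed full additive subcategory of `C` generated by a set `S` of objects:
the smallest class of objects containing `S` and the zero objects and stable under
extensions by distinguished triangles. -/
inductive ExtClosed (S : Set C) : C → Prop
  | of {E : C} : E ∈ S → ExtClosed S E
  | zero {E : C} : IsZero E → ExtClosed S E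
  | ext {A E B : C} (f : A ⟶ E) (g : E ⟶ B) (h : B ⟶ A⟦(1 : ℤ)⟧) :
      Triangle.mk f g h ∈ distinguishedTriangles →
      ExtClosed S A → ExtClosed S B → ExtClosed S E

/-- `P((-∞, θ])`: the smallest extension-closed full additive subcategory of `C`
containing all `P(θ')` with `θ' ≤ θ`. -/
def Slicing.le (σ : Slicing C) (θ : ℝ) : Set C :=
  {E | ExtClosed {F | ∃ θ' ≤ θ, F ∈ σ.P θ'} E}

/-- `σ ⪅ ω` iff `P_σ(θ) ⊆ P_ω((-∞, θ])` for every `θ ∈ ℝ`. -/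
def Slicing.lsm (σ ω : Slicing C) : Prop :=
  ∀ θ : ℝ, σ.P θ ⊆ ω.le θ


universe v' u'

/-!
Applying `Φ` to a Harder–Narasimhan filtration of `E` with respect to `Q_ω` gives one of `Φ(E)` with
respect to `P_ω` with the same phases: the factors stay nonzero because an object killed by `Φ`
lies in every `Q_ω(θ)` and therefore vanishes. On either side, membership in the subcategory of
phases `≤ θ` is detected by the largest phase of the filtration, since the first factor maps
nontrivially to the object. Hence `E` lies in `Q_ω((-∞, θ])` as soon as `Φ(E)` lies in
`P_ω((-∞, θ])`.
-/

section

variable {𝒯 : Type*} [Category 𝒯] [Preadditive 𝒯] [HasZeroObject 𝒯] [HasShift 𝒯 ℤ]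
  [∀ n : ℤ, (shiftFunctor 𝒯 n).Additive] [Pretriangulated 𝒯]

theorem eq_zero_of_comp_mor₁_eq_zero {T : Triangle 𝒯} (hT : T ∈ distinguishedTriangles) {X : 𝒯}
    (hX : ∀ l : X⟦(1 : ℤ)⟧ ⟶ T.obj₃, l = 0) {j : X ⟶ T.obj₁} (hj : j ≫ T.mor₁ = 0) : j = 0 := by
  have hj_shift : j⟦(1 : ℤ)⟧' ≫ T.mor₁⟦(1 : ℤ)⟧' = 0 := by
    rw [← Functor.map_comp, hj, Functor.map_zero]
  obtain ⟨l, hl⟩ := Triangle.coyoneda_exact₁ T hT _ hj_shift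
  rwa [hX l, zero_comp, Functor.map_eq_zero_iff] at hl

theorem ExtClosed.hom_zero {S : Set 𝒯} {X E : 𝒯} (hE : ExtClosed S E)
    (hX : ∀ F ∈ S, ∀ f : X ⟶ F, f = 0) (f : X ⟶ E) : f = 0 := by
  induction hE with
  | of hF => exact hX _ hF f
  | zero hE => exact hE.eq_of_tgt f 0
  | ext a b c hT _ _ ihA ihB =>
    obtain ⟨l, hl⟩ := Triangle.coyoneda_exact₂ _ hT f (ihB _)
    rw [hl, ihA l]
    exact zero_comp

namespace Slicing

theorem isZero_of_mem_of_mem (P : Slicing 𝒯) {θ₁ θ₂ : ℝ} (hθ : θ₂ < θ₁) {E : 𝒯}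
    (h₁ : E ∈ P.P θ₁) (h₂ : E ∈ P.P θ₂) : IsZero E :=
  (IsZero.iff_id_eq_zero E).2 (P.hom_zero θ₁ θ₂ hθ E E h₁ h₂ (𝟙 E))

theorem hom_zero_of_mem_le (P : Slicing 𝒯) {t θ : ℝ} (hθ : θ < t) {X E : 𝒯}
    (hX : X ∈ P.P t) (hE : E ∈ P.le θ) (f : X ⟶ E) : f = 0 := by
  refine ExtClosed.hom_zero hE ?_ f
  rintro F ⟨s, hs, hF⟩
  exact P.hom_zero t s (hs.trans_lt hθ) X F hX hF

/-- A Harder–Narasimhan filtration of `E` with respect to `P`. Factors and phases are indexed from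
`0`, so that `factor i` is the cone of `chain i ⟶ chain (i + 1)`; the values of `chain` beyond
`length`, and of `factor` and `phase` from `length` on, carry no information. -/
structure HNFiltration (P : Slicing 𝒯) (E : 𝒯) where
  length : ℕ
  chain : ℕ → 𝒯
  factor : ℕ → 𝒯
  phase : ℕ → ℝ
  isZero_chain_zero : IsZero (chain 0)
  chain_length : chain length = E
  strictAntiOn_phase : StrictAntiOn phase (Set.Iio length)
  not_isZero_factor : ∀ i < length, ¬ IsZero (factor i)
  factor_mem : ∀ i < length, factor i ∈ P.P (phase i)
  exists_distinguished : ∀ i < length, ∃ (f : chain i ⟶ chain (i + 1))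
    (g : chain (i + 1) ⟶ factor i) (h : factor i ⟶ (chain i)⟦(1 : ℤ)⟧),
    Triangle.mk f g h ∈ distinguishedTriangles

theorem nonempty_hnFiltration (P : Slicing 𝒯) {E : 𝒯} (hE : ¬ IsZero E) :
    Nonempty (P.HNFiltration E) := by
  obtain ⟨m, chain, A, θ, hzero, hm, hθ, hA⟩ := P.hn E hE
  exact ⟨{
    length := m
    chain := chain
    factor := fun i ↦ A (i + 1)
    phase := fun i ↦ θ (i + 1)
    isZero_chain_zero := hzero
    chain_length := hm
    strictAntiOn_phase := strictAntiOn_of_succ_lt Set.ordConnected_Iio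
      fun i _ _ hi ↦ hθ (i + 1) i.succ_pos hi
    not_isZero_factor := fun i hi ↦ (hA (i + 1) i.succ_pos hi).1
    factor_mem := fun i hi ↦ (hA (i + 1) i.succ_pos hi).2.1
    exists_distinguished := fun i hi ↦ (hA (i + 1) i.succ_pos hi).2.2 }⟩

namespace HNFiltration

variable {P : Slicing 𝒯} {E : 𝒯} (F : P.HNFiltration E)
include F

theorem length_pos (hE : ¬ IsZero E) : 0 < F.length := by
  refine Nat.pos_of_ne_zero fun hlength ↦ hE ?_
  rw [← F.chain_length, hlength]
  exact F.isZero_chain_zero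

theorem phase_le_phase_zero {i : ℕ} (hi : i < F.length) : F.phase i ≤ F.phase 0 :=
  F.strictAntiOn_phase.antitoneOn (Nat.zero_lt_of_lt hi) hi i.zero_le

theorem chain_mem_le {θ : ℝ} (hθ : F.phase 0 ≤ θ) {i : ℕ} (hi : i ≤ F.length) :
    F.chain i ∈ P.le θ := by
  induction i with
  | zero => exact .zero F.isZero_chain_zero
  | succ i ih =>
    obtain ⟨f, g, h, hT⟩ := F.exists_distinguished i hi
    have hfactor : F.factor i ∈ P.le θ :=
      .of ⟨F.phase i, (F.phase_le_phase_zero hi).trans hθ, F.factor_mem i hi⟩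
    exact .ext f g h hT (ih (Nat.le_of_succ_le hi)) hfactor

theorem mem_le {θ : ℝ} (hθ : F.phase 0 ≤ θ) : E ∈ P.le θ :=
  F.chain_length ▸ F.chain_mem_le hθ le_rfl

theorem hom_chain_eq_zero {t : ℝ} (ht : F.phase 0 < t + 1) {X : 𝒯} (hX : X ∈ P.P t)
    (hXE : ∀ f : X ⟶ E, f = 0) {i : ℕ} (hi : i ≤ F.length) : ∀ f : X ⟶ F.chain i, f = 0 := by
  induction hi using Nat.decreasingInduction with
  | self => rwa [F.chain_length]
  | of_succ i hi ih =>
    obtain ⟨f, g, h, hT⟩ := F.exists_distinguished i hi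
    have hfactor (l : X⟦(1 : ℤ)⟧ ⟶ F.factor i) : l = 0 :=
      P.hom_zero (t + 1) (F.phase i) ((F.phase_le_phase_zero hi).trans_lt ht) _ _
        ((P.shift_mem t X).1 hX) (F.factor_mem i hi) l
    exact fun j ↦ eq_zero_of_comp_mor₁_eq_zero hT hfactor (ih (j ≫ f))

theorem exists_factor_zero_hom_ne_zero (hE : ¬ IsZero E) : ∃ f : F.factor 0 ⟶ E, f ≠ 0 := by
  by_contra! hzero
  have hpos := F.length_pos hE
  obtain ⟨f, g, h, hT⟩ := F.exists_distinguished 0 hpos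
  have : IsIso g := (Triangle.isZero₁_iff_isIso₂ _ hT).1 F.isZero_chain_zero
  have hinv : inv g = 0 :=
    F.hom_chain_eq_zero (lt_add_one _) (F.factor_mem 0 hpos) hzero hpos (inv g)
  refine F.not_isZero_factor 0 hpos ((IsZero.iff_id_eq_zero _).2 ?_)
  rw [← IsIso.inv_hom_id g, hinv, zero_comp]

theorem phase_zero_le_of_mem_le (hE : ¬ IsZero E) {θ : ℝ} (hEθ : E ∈ P.le θ) :
    F.phase 0 ≤ θ := by
  by_contra! hθ
  obtain ⟨f, hf⟩ := F.exists_factor_zero_hom_ne_zero hE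
  exact hf (P.hom_zero_of_mem_le hθ (F.factor_mem 0 (F.length_pos hE)) hEθ f)

end HNFiltration

variable {𝒯' : Type*} [Category 𝒯'] [Preadditive 𝒯'] [HasZeroObject 𝒯'] [HasShift 𝒯' ℤ]
  [∀ n : ℤ, (shiftFunctor 𝒯' n).Additive] [Pretriangulated 𝒯']

theorem isZero_of_isZero_map (Φ : 𝒯 ⥤ 𝒯') {P : Slicing 𝒯'} {Q : Slicing 𝒯}
    (hPQ : ∀ (θ : ℝ) (X : 𝒯), Φ.obj X ∈ P.P θ → X ∈ Q.P θ) {X : 𝒯} (hX : IsZero (Φ.obj X)) :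
    IsZero X :=
  have hmem (θ : ℝ) : X ∈ Q.P θ := hPQ θ X (P.zero_mem θ _ hX)
  Q.isZero_of_mem_of_mem one_pos (hmem 1) (hmem 0)

variable (Φ : 𝒯 ⥤ 𝒯') [Φ.CommShift ℤ] [Φ.IsTriangulated] {P : Slicing 𝒯'} {Q : Slicing 𝒯}

/-- The image of a Harder–Narasimhan filtration under an exact functor that reflects zero objects
and maps `Q(θ)` into `P(θ)`. -/
def HNFiltration.map {E : 𝒯} (F : Q.HNFiltration E)
    (hΦ : ∀ X : 𝒯, IsZero (Φ.obj X) → IsZero X)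
    (hQP : ∀ θ : ℝ, ∀ X ∈ Q.P θ, Φ.obj X ∈ P.P θ) : P.HNFiltration (Φ.obj E) where
  length := F.length
  chain i := Φ.obj (F.chain i)
  factor i := Φ.obj (F.factor i)
  phase := F.phase
  isZero_chain_zero := Φ.map_isZero F.isZero_chain_zero
  chain_length := congrArg Φ.obj F.chain_length
  strictAntiOn_phase := F.strictAntiOn_phase
  not_isZero_factor i hi := fun hzero ↦ F.not_isZero_factor i hi (hΦ _ hzero)
  factor_mem i hi := hQP _ _ (F.factor_mem i hi)
  exists_distinguished i hi := by
    obtain ⟨f, g, h, hT⟩ := F.exists_distinguished i hi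
    exact ⟨_, _, _, Φ.map_distinguished _ hT⟩

theorem mem_le_of_map_mem_le {E : 𝒯} {θ : ℝ} (hΦ : ∀ X : 𝒯, IsZero (Φ.obj X) → IsZero X)
    (hQP : ∀ θ : ℝ, ∀ X ∈ Q.P θ, Φ.obj X ∈ P.P θ) (hE : Φ.obj E ∈ P.le θ) : E ∈ Q.le θ := by
  by_cases hE₀ : IsZero E
  · exact .zero hE₀
  obtain ⟨F⟩ := Q.nonempty_hnFiltration hE₀
  exact F.mem_le ((F.map Φ hΦ hQP).phase_zero_le_of_mem_le (mt (hΦ E) hE₀) hE)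

end Slicing

theorem statement10_general
    {𝒯' : Type*} [Category 𝒯'] [Preadditive 𝒯'] [HasZeroObject 𝒯'] [HasShift 𝒯' ℤ]
    [∀ n : ℤ, (shiftFunctor 𝒯' n).Additive] [Pretriangulated 𝒯']
    (Φ : 𝒯 ⥤ 𝒯') [Φ.CommShift ℤ] [Φ.IsTriangulated] (P : Slicing 𝒯') (Q : Slicing 𝒯)
    (hQ : ∀ θ : ℝ, Q.P θ = {E : 𝒯 | Φ.obj E ∈ P.P θ}) (θ : ℝ) :
    {E : 𝒯 | Φ.obj E ∈ P.le θ} ⊆ Q.le θ := by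
  have hmem (θ : ℝ) (X : 𝒯) : X ∈ Q.P θ ↔ Φ.obj X ∈ P.P θ := Set.ext_iff.1 (hQ θ) X
  exact fun _ hE ↦ Slicing.mem_le_of_map_mem_le Φ
    (fun X ↦ Slicing.isZero_of_isZero_map Φ fun θ X ↦ (hmem θ X).2) (fun θ X ↦ (hmem θ X).1) hE

end

/-- Let `Φ : T ⥤ T'` be an exact (triangulated) `ℂ`-linear functor
between `ℂ`-linear triangulated categories, and let `P_σ, P_ω` be slicings on `T'` with
`σ ⪅ ω`. If the families `Q_σ(θ) = {E : Φ(E) ∈ P_σ(θ)}` and `Q_ω(θ) = {E : Φ(E) ∈ P_ω(θ)}`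
are slicings on `T`, then `Q_σ ⪅ Q_ω`. -/
theorem statement10
    {D : Type u'} [Category.{v'} D] [Preadditive D] [HasZeroObject D] [Linear ℂ D]
    [HasShift D ℤ] [∀ n : ℤ, (shiftFunctor D n).Additive] [Pretriangulated D]
    (Φ : C ⥤ D) [Φ.Additive] [Φ.Linear ℂ] [Φ.CommShift ℤ] [Φ.IsTriangulated]
    (Pσ Pω : Slicing D) (h : Pσ.lsm Pω)
    (Qσ Qω : Slicing C)
    (hQσ : ∀ θ : ℝ, Qσ.P θ = {E : C | Φ.obj E ∈ Pσ.P θ})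
    (hQω : ∀ θ : ℝ, Qω.P θ = {E : C | Φ.obj E ∈ Pω.P θ}) :
    Qσ.lsm Qω :=
  fun θ _ hE ↦ statement10_general Φ Pω Qω hQω θ (h θ ((hQσ θ).subset hE))
end
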